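/- arXiv:1408.1703 — 2 statements merged into one kernel-verified Lean document; each statement's English description precedes it below -/
import Mathlib

section
/- Every flow-admissible signed eulerian graph with an odd number of negative edges contains two edge-disjoint unbalanced circuits. -/
open Finset

/-- A signed multigraph on vertex type `V` with edge type `E`: each edge `e`
consists of two half-edges indexed by `Bool`; `ends e i` is the end-vertex at
which the half-edge `(e, i)` is attached (loops and multiple edges are
allowed), and `sign e ∈ {1, -1}` is the sign of the edge `e`. -/
structure SignedGraph (V E : Type) where
  ends : E → Bool → V
  sign : E → ℤˣ

namespace SignedGraph

variable {V E : Type} [Fintype V] [Fintype E] [DecidableEq V] [DecidableEq E]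

/-- The valency of `v` in the subgraph spanned by the edge set `S`:
the number of half-edges of edges of `S` attached at `v` (a loop at `v`
contributes `2`). -/
def valencyOn (G : SignedGraph V E) (S : Finset E) (v : V) : ℕ :=
  (univ.filter fun p : E × Bool => p.1 ∈ S ∧ G.ends p.1 p.2 = v).card

/-- The valency of a vertex in `G`. -/
def valency (G : SignedGraph V E) (v : V) : ℕ :=
  G.valencyOn univ v

/-- The set of vertices incident with some edge of `S`. -/
def suppV (G : SignedGraph V E) (S : Finset E) : Finset V :=
  univ.filter fun v => ∃ e ∈ S, ∃ i : Bool, G.ends e i = v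

/-- `u` and `v` are joined by an edge of `S`. -/
def AdjOn (G : SignedGraph V E) (S : Finset E) (u v : V) : Prop :=
  ∃ e ∈ S, ∃ i : Bool, G.ends e i = u ∧ G.ends e (!i) = v

/-- The subgraph spanned by the edge set `S` is connected: any two vertices
incident with edges of `S` are joined by a walk using edges of `S`. -/
def ConnOn (G : SignedGraph V E) (S : Finset E) : Prop :=
  ∀ u ∈ G.suppV S, ∀ v ∈ G.suppV S, Relation.ReflTransGen (G.AdjOn S) u v

/-- `G` is connected (as a graph on the whole vertex set `V`). -/
def Connected (G : SignedGraph V E) : Prop :=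
  Nonempty V ∧ ∀ u v : V, Relation.ReflTransGen (G.AdjOn univ) u v

/-- The edge set `S` spans a circuit: a nonempty connected `2`-regular
subgraph. -/
def IsCircuit (G : SignedGraph V E) (S : Finset E) : Prop :=
  S.Nonempty ∧ G.ConnOn S ∧ ∀ v ∈ G.suppV S, G.valencyOn S v = 2

/-- The sign of a set of edges: the product of the signs of its edges. -/
def signOf (G : SignedGraph V E) (S : Finset E) : ℤˣ :=
  ∏ e ∈ S, G.sign e

/-- The negative edges among `S`. -/
def negEdges (G : SignedGraph V E) (S : Finset E) : Finset E :=
  S.filter fun e => G.sign e = -1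

/-- A balanced circuit: a circuit of sign `+1`. -/
def IsBalancedCircuit (G : SignedGraph V E) (S : Finset E) : Prop :=
  G.IsCircuit S ∧ G.signOf S = 1

/-- An unbalanced circuit: a circuit of sign `-1`. -/
def IsUnbalancedCircuit (G : SignedGraph V E) (S : Finset E) : Prop :=
  G.IsCircuit S ∧ G.signOf S = -1

/-- `G` is balanced: it contains no unbalanced circuit. -/
def Balanced (G : SignedGraph V E) : Prop :=
  ∀ S : Finset E, G.IsCircuit S → G.signOf S = 1

/-- `G` is tightly unbalanced: it is unbalanced, but for some edge `f` the
graph `G - f` is balanced. -/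
def TightlyUnbalanced (G : SignedGraph V E) : Prop :=
  ¬ G.Balanced ∧ ∃ f : E, ∀ S : Finset E, G.IsCircuit S → f ∉ S → G.signOf S = 1

/-- `G` is eulerian: connected with all valencies even. -/
def Eulerian (G : SignedGraph V E) : Prop :=
  G.Connected ∧ ∀ v : V, Even (G.valency v)

/-- The edge set `S` spans an eulerian subgraph of `G`. -/
def EulerianOn (G : SignedGraph V E) (S : Finset E) : Prop :=
  S.Nonempty ∧ G.ConnOn S ∧ ∀ v : V, Even (G.valencyOn S v)

/-- An orientation (bidirection) of `G`: `dir e i = true` means that the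
half-edge `(e, i)` is directed towards its end-vertex, `dir e i = false` that
it is directed away from it.  Compatibility: a positive edge becomes an
ordinary directed edge (one half-edge in, one out) and a negative edge becomes
a broken (extroverted or introverted) edge. -/
structure Orientation (G : SignedGraph V E) where
  dir : E → Bool → Bool
  compat : ∀ e : E, G.sign e = 1 ↔ dir e false ≠ dir e true

/-- `φ` is a flow on `G` with respect to the orientation `O`: at every vertex
`v`, the sum of values on half-edges directed into `v` equals the sum of
values on half-edges directed out of `v` (Kirchhoff's law). -/
def IsFlow {A : Type} [AddCommGroup A] (G : SignedGraph V E)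
    (O : G.Orientation) (φ : E → A) : Prop :=
  ∀ v : V,
    ∑ p ∈ univ.filter (fun p : E × Bool => G.ends p.1 p.2 = v),
      (if O.dir p.1 p.2 then φ p.1 else -φ p.1) = 0

/-- `G` admits a nowhere-zero `A`-flow. -/
def HasNZFlow (G : SignedGraph V E) (A : Type) [AddCommGroup A] : Prop :=
  ∃ (O : G.Orientation) (φ : E → A), G.IsFlow O φ ∧ ∀ e : E, φ e ≠ 0

/-- `G` is flow-admissible: it admits a nowhere-zero integer flow. -/
def FlowAdmissible (G : SignedGraph V E) : Prop :=
  ∃ (O : G.Orientation) (φ : E → ℤ), G.IsFlow O φ ∧ ∀ e : E, φ e ≠ 0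

/-- `G` admits a nowhere-zero `k`-flow: an integer flow with all values in
`{±1, …, ±(k-1)}`. -/
def HasNZkFlow (G : SignedGraph V E) (k : ℕ) : Prop :=
  ∃ (O : G.Orientation) (φ : E → ℤ), G.IsFlow O φ ∧
    ∀ e : E, φ e ≠ 0 ∧ |φ e| < (k : ℤ)

/-- `G` is triply odd: it can be decomposed into three edge-disjoint eulerian
subgraphs, each with an odd number of negative edges, sharing a common
vertex. -/
def TriplyOdd (G : SignedGraph V E) : Prop :=
  ∃ S₁ S₂ S₃ : Finset E,
    Disjoint S₁ S₂ ∧ Disjoint S₁ S₃ ∧ Disjoint S₂ S₃ ∧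
    S₁ ∪ S₂ ∪ S₃ = univ ∧
    G.EulerianOn S₁ ∧ G.EulerianOn S₂ ∧ G.EulerianOn S₃ ∧
    Odd (G.negEdges S₁).card ∧ Odd (G.negEdges S₂).card ∧
    Odd (G.negEdges S₃).card ∧
    ∃ v : V, v ∈ G.suppV S₁ ∧ v ∈ G.suppV S₂ ∧ v ∈ G.suppV S₃

/-- The edge set `P` spans a (nontrivial) path from `u` to `v`: a connected
subgraph in which `u` and `v` have valency `1` and all other vertices have
valency `2`. -/
def IsPathOn (G : SignedGraph V E) (P : Finset E) (u v : V) : Prop :=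
  u ≠ v ∧ G.ConnOn P ∧ u ∈ G.suppV P ∧ v ∈ G.suppV P ∧
  G.valencyOn P u = 1 ∧ G.valencyOn P v = 1 ∧
  ∀ w ∈ G.suppV P, w ≠ u → w ≠ v → G.valencyOn P w = 2

/-- `T` spans a signed circuit of type (2): the union of two unbalanced
circuits meeting at a single vertex. -/
def IsType2 (G : SignedGraph V E) (T : Finset E) : Prop :=
  ∃ (S₁ S₂ : Finset E) (v : V),
    G.IsUnbalancedCircuit S₁ ∧ G.IsUnbalancedCircuit S₂ ∧ Disjoint S₁ S₂ ∧
    G.suppV S₁ ∩ G.suppV S₂ = {v} ∧ S₁ ∪ S₂ = T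

/-- `T` spans a signed circuit of type (3): the union of two vertex-disjoint
unbalanced circuits together with a path meeting the circuits only at its
ends. -/
def IsType3 (G : SignedGraph V E) (T : Finset E) : Prop :=
  ∃ (S₁ S₂ P : Finset E) (u v : V),
    G.IsUnbalancedCircuit S₁ ∧ G.IsUnbalancedCircuit S₂ ∧
    Disjoint (G.suppV S₁) (G.suppV S₂) ∧
    G.IsPathOn P u v ∧ u ∈ G.suppV S₁ ∧ v ∈ G.suppV S₂ ∧
    G.suppV P ∩ G.suppV S₁ = {u} ∧ G.suppV P ∩ G.suppV S₂ = {v} ∧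
    Disjoint P (S₁ ∪ S₂) ∧ S₁ ∪ S₂ ∪ P = T

/-- `T` spans a signed circuit: a balanced circuit, or a signed circuit of
type (2) or (3). -/
def IsSignedCircuit (G : SignedGraph V E) (T : Finset E) : Prop :=
  G.IsBalancedCircuit T ∨ G.IsType2 T ∨ G.IsType3 T

/-- `T` spans a weak unbalanced bicircuit: two edge-disjoint unbalanced
circuits (not necessarily vertex-disjoint) joined by a possibly trivial path
having no edge in the two circuits. -/
def IsWeakBicircuit (G : SignedGraph V E) (T : Finset E) : Prop :=
  ∃ C₁ C₂ : Finset E,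
    G.IsUnbalancedCircuit C₁ ∧ G.IsUnbalancedCircuit C₂ ∧ Disjoint C₁ C₂ ∧
    (((∃ v : V, v ∈ G.suppV C₁ ∧ v ∈ G.suppV C₂) ∧ T = C₁ ∪ C₂) ∨
      ∃ (P : Finset E) (u v : V),
        G.IsPathOn P u v ∧ u ∈ G.suppV C₁ ∧ v ∈ G.suppV C₂ ∧
        Disjoint P (C₁ ∪ C₂) ∧ T = C₁ ∪ C₂ ∪ P)

/-- Every connected component of `G - f` contains an unbalanced circuit,
i.e. `G - f` has no balanced component. -/
def NoBalancedComponentAvoiding (G : SignedGraph V E) (f : E) : Prop :=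
  ∀ u : V, ∃ S : Finset E,
    G.IsCircuit S ∧ G.signOf S = -1 ∧ f ∉ S ∧
    ∀ w ∈ G.suppV S, Relation.ReflTransGen (G.AdjOn (univ.erase f)) w u

/-- `G` is 2-edge-connected: connected, and still connected after removing
any single edge. -/
def TwoEdgeConnected (G : SignedGraph V E) : Prop :=
  G.Connected ∧ ∀ f : E, ∀ u v : V,
    Relation.ReflTransGen (G.AdjOn (univ.erase f)) u v

/-- `G` is antibalanced: replacing its signature `σ` by `-σ` makes it
balanced. -/
def Antibalanced (G : SignedGraph V E) : Prop :=
  ∀ S : Finset E, G.IsCircuit S → (∏ e ∈ S, (-G.sign e)) = 1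

end SignedGraph

/-!
Call a set of edges even if it has even valency at every vertex; even sets are closed under
symmetric difference, on which the sign is multiplicative, and an even set of sign `-1` contains
an unbalanced circuit. The set of all edges is even of sign `-1`. Hence it suffices to cover it by
three even sets `X`, `Y`, `Z` of sign `1` with empty common intersection: the complements of
`X ∆ Z` and `Y ∆ Z` are then even of sign `-1`, and they are disjoint.

Such sets are unions of balanced arcs, the closed subtrails of sign `1` of an Euler tour. If some
edge `f` of the tour lay in no balanced arc, then switching at suitable vertices would make `f`
the only negative edge, and summing Kirchhoff's law over all vertices would show that a flow takes
a value `φ f` with `2 φ f = 0`. So the balanced arcs cover the tour, and a shortest cyclic chain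
of greedily chosen arcs covers it in such a way that only neighbours overlap. Take for `Z` the
last arc of the chain, and for `X` and `Y` the unions of the remaining arcs of even and of odd
index.
-/

namespace SignedGraph

section BigOperators

variable {ι M : Type*} [DecidableEq ι] [CommMonoid M]

@[to_additive]
theorem prod_symmDiff_mul_prod_inter (s t : Finset ι) (f : ι → M) :
    (∏ i ∈ symmDiff s t, f i) * ((∏ i ∈ s ∩ t, f i) * ∏ i ∈ s ∩ t, f i) =
      (∏ i ∈ s, f i) * ∏ i ∈ t, f i := by
  have hdisj : Disjoint (s \ t) (t \ s) := disjoint_sdiff_sdiff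
  have hs := prod_inter_mul_prod_sdiff s t f
  have ht := prod_inter_mul_prod_sdiff t s f
  rw [inter_comm] at ht
  rw [symmDiff_def, sup_eq_union, prod_union hdisj, ← hs, ← ht, mul_mul_mul_comm,
    mul_comm (∏ i ∈ s \ t, f i), mul_comm (∏ i ∈ t \ s, f i)]

end BigOperators

/-! ### Even edge sets -/

variable {V E : Type} {G : SignedGraph V E} {S T : Finset E}

section EvenOn

theorem signOf_eq_neg_one_of_odd_card_negEdges (h : Odd #(G.negEdges S)) : G.signOf S = -1 := by
  have hsign (e : E) : G.sign e = if G.sign e = -1 then -1 else 1 := by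
    rcases Int.units_eq_one_or (G.sign e) with he | he <;> simp [he]
  calc G.signOf S = ∏ e ∈ S, if G.sign e = -1 then -1 else 1 := prod_congr rfl fun e _ => hsign e
    _ = (-1) ^ #(G.negEdges S) := by rw [prod_ite, prod_const, prod_const_one, mul_one, negEdges]
    _ = -1 := h.neg_one_pow

theorem signOf_symmDiff [DecidableEq E] (S T : Finset E) :
    G.signOf (symmDiff S T) = G.signOf S * G.signOf T := by
  simpa only [signOf, Int.units_mul_self, mul_one] using prod_symmDiff_mul_prod_inter S T G.sign

/-- `G.Joins e u v`: the edge `e` has end-vertices `u` and `v`. -/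
def Joins (G : SignedGraph V E) (e : E) (u v : V) : Prop :=
  ∃ i : Bool, G.ends e i = u ∧ G.ends e (!i) = v

theorem Joins.symm {e : E} {u v : V} : G.Joins e u v → G.Joins e v u := by
  rintro ⟨i, hu, hv⟩
  exact ⟨!i, hv, by rwa [Bool.not_not]⟩

theorem Joins.right_eq {e : E} {u v u' v' : V} (h : G.Joins e u v) (h' : G.Joins e u' v') :
    v = u' ∨ v = v' := by
  obtain ⟨i, -, rfl⟩ := h
  obtain ⟨j, rfl, rfl⟩ := h'
  cases i <;> cases j <;> simp

variable [Fintype E] [DecidableEq V] [DecidableEq E]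

theorem valencyOn_eq_sum (S : Finset E) (v : V) :
    G.valencyOn S v =
      ∑ e ∈ S, ((if G.ends e true = v then 1 else 0) + if G.ends e false = v then 1 else 0) := by
  rw [valencyOn, card_filter, Fintype.sum_prod_type, ← sum_subset (subset_univ S)]
  · exact sum_congr rfl fun e he => by simp only [he, true_and, Fintype.sum_bool]
  · exact fun e _ he => by simp only [he, false_and, if_false, sum_const_zero]

theorem Joins.valencyOn_singleton {e : E} {u v : V} (h : G.Joins e u v) (w : V) :
    G.valencyOn {e} w = (if u = w then 1 else 0) + if v = w then 1 else 0 := by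
  obtain ⟨i, rfl, rfl⟩ := h
  rw [valencyOn_eq_sum, sum_singleton]
  cases i
  · exact add_comm _ _
  · rfl

theorem valencyOn_eq_sum_singleton (S : Finset E) (v : V) :
    G.valencyOn S v = ∑ e ∈ S, G.valencyOn {e} v := by
  simp only [valencyOn_eq_sum, sum_singleton]

theorem exists_joins_of_valencyOn_ne_zero {v : V} (h : G.valencyOn S v ≠ 0) :
    ∃ e ∈ S, ∃ w, G.Joins e v w := by
  obtain ⟨⟨e, i⟩, he⟩ := card_ne_zero.mp h
  obtain ⟨heS, hv⟩ := (mem_filter.mp he).2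
  exact ⟨e, heS, _, i, hv, rfl⟩

theorem valencyOn_ne_zero_of_mem_suppV [Fintype V] {v : V} (h : v ∈ G.suppV S) :
    G.valencyOn S v ≠ 0 := by
  obtain ⟨e, he, i, hv⟩ := (mem_filter.mp h).2
  exact card_ne_zero.mpr ⟨(e, i), mem_filter.mpr ⟨mem_univ _, he, hv⟩⟩

/-- An edge set is even when it meets every vertex in an even number of half-edges; the even edge
sets are the elements of the cycle space of `G` over the field with two elements. -/
def EvenOn (G : SignedGraph V E) (S : Finset E) : Prop :=
  ∀ v : V, Even (G.valencyOn S v)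

theorem EvenOn.symmDiff (hS : G.EvenOn S) (hT : G.EvenOn T) : G.EvenOn (symmDiff S T) := by
  intro v
  have hsum := sum_symmDiff_add_sum_inter S T fun e => G.valencyOn {e} v
  simp only [← valencyOn_eq_sum_singleton] at hsum
  have hST : Even (G.valencyOn S v + G.valencyOn T v) := (hS v).add (hT v)
  rw [← hsum, Nat.even_add] at hST
  exact hST.mpr (Even.add_self _)

theorem EvenOn.biUnion {ι : Type} {I : Finset ι} {B : ι → Finset E}
    (hdisj : (I : Set ι).PairwiseDisjoint B) (hB : ∀ i ∈ I, G.EvenOn (B i)) :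
    G.EvenOn (I.biUnion B) := by
  intro v
  rw [valencyOn_eq_sum_singleton, sum_biUnion hdisj]
  exact even_sum _ fun i hi => by simpa only [← valencyOn_eq_sum_singleton] using hB i hi v

theorem EvenOn.sdiff (hS : G.EvenOn S) (hT : G.EvenOn T) (h : T ⊆ S) : G.EvenOn (S \ T) :=
  symmDiff_of_ge h ▸ hS.symmDiff hT

/-- A balanced even edge set: an element of the cycle space of sign `1`. -/
def BalancedEvenOn (G : SignedGraph V E) (S : Finset E) : Prop :=
  G.EvenOn S ∧ G.signOf S = 1

theorem BalancedEvenOn.symmDiff (hS : G.BalancedEvenOn S) (hT : G.BalancedEvenOn T) :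
    G.BalancedEvenOn (symmDiff S T) :=
  ⟨hS.1.symmDiff hT.1, by rw [signOf_symmDiff, hS.2, hT.2, mul_one]⟩

theorem BalancedEvenOn.biUnion {ι : Type} {I : Finset ι} {B : ι → Finset E}
    (hdisj : (I : Set ι).PairwiseDisjoint B) (hB : ∀ i ∈ I, G.BalancedEvenOn (B i)) :
    G.BalancedEvenOn (I.biUnion B) :=
  ⟨.biUnion hdisj fun i hi => (hB i hi).1,
    (prod_biUnion hdisj).trans (prod_eq_one fun i hi => (hB i hi).2)⟩

/-- An unbalanced even edge set: an element of the cycle space of sign `-1`. -/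
def UnbalancedEvenOn (G : SignedGraph V E) (S : Finset E) : Prop :=
  G.EvenOn S ∧ G.signOf S = -1

theorem UnbalancedEvenOn.sdiff (hS : G.UnbalancedEvenOn S) (hT : G.BalancedEvenOn T)
    (h : T ⊆ S) : G.UnbalancedEvenOn (S \ T) :=
  ⟨hS.1.sdiff hT.1 h, by rw [← symmDiff_of_ge h, signOf_symmDiff, hS.2, hT.2, mul_one]⟩

/- With the colours `(1, 0)`, `(0, 1)` and `(1, 1)` of `𝔽₂²` on `X`, `Y` and `Z`, the hypotheses say
that the colours of the sets containing an edge never add up to zero, so `X ∆ Z` and `Y ∆ Z`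
together contain every edge and their complements are disjoint. -/
theorem exists_disjoint_unbalancedEvenOn_of_cover {X Y Z : Finset E}
    (huniv : G.UnbalancedEvenOn univ) (hX : G.BalancedEvenOn X) (hY : G.BalancedEvenOn Y)
    (hZ : G.BalancedEvenOn Z) (hcover : ∀ e, e ∈ X ∨ e ∈ Y ∨ e ∈ Z)
    (hinter : ∀ e ∈ X, e ∈ Y → e ∉ Z) :
    ∃ S₁ S₂, G.UnbalancedEvenOn S₁ ∧ G.UnbalancedEvenOn S₂ ∧ Disjoint S₁ S₂ := by
  refine ⟨univ \ symmDiff X Z, univ \ symmDiff Y Z, huniv.sdiff (hX.symmDiff hZ) (subset_univ _),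
    huniv.sdiff (hY.symmDiff hZ) (subset_univ _), disjoint_left.mpr fun e he₁ he₂ => ?_⟩
  simp only [mem_sdiff, mem_univ, true_and, mem_symmDiff] at he₁ he₂
  have := hcover e
  have := hinter e
  tauto

end EvenOn

/-! ### Trails and circuits -/

section Trail

/-- The edges `e i` with `a ≤ i < b` are distinct members of `S`, and they form a trail with
successive vertices `x a, …, x b`. Values of `x` and `e` at other indices are irrelevant. -/
structure IsTrail (G : SignedGraph V E) (S : Finset E) (x : ℕ → V) (e : ℕ → E) (a b : ℕ) :
    Prop where
  mem : ∀ i ∈ Ico a b, e i ∈ S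
  joins : ∀ i ∈ Ico a b, G.Joins (e i) (x i) (x (i + 1))
  injOn : Set.InjOn e (Ico a b)

namespace IsTrail

variable {x : ℕ → V} {e : ℕ → E} {a b : ℕ}

theorem mono (h : G.IsTrail S x e a b) {a' b' : ℕ} (ha : a ≤ a') (hb : b' ≤ b) :
    G.IsTrail S x e a' b' where
  mem i hi := h.mem i (Ico_subset_Ico ha hb hi)
  joins i hi := h.joins i (Ico_subset_Ico ha hb hi)
  injOn := h.injOn.mono (coe_subset.mpr (Ico_subset_Ico ha hb))

theorem length_le_card (h : G.IsTrail S x e a b) : b - a ≤ #S :=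
  Nat.card_Ico a b ▸ card_le_card_of_injOn e h.mem h.injOn

variable [DecidableEq E]

theorem reflTransGen (h : G.IsTrail S x e a b) {i : ℕ} (ha : a ≤ i) (hb : i ≤ b) :
    Relation.ReflTransGen (G.AdjOn ((Ico a b).image e)) (x a) (x i) := by
  induction i, ha using Nat.le_induction with
  | base => exact .refl
  | succ i ha ih =>
    have hi : i ∈ Ico a b := mem_Ico.mpr ⟨ha, hb⟩
    exact (ih (Nat.le_of_succ_le hb)).tail ⟨e i, mem_image_of_mem e hi, h.joins i hi⟩

theorem image_subset (h : G.IsTrail S x e a b) : (Ico a b).image e ⊆ S :=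
  image_subset_iff.mpr h.mem

theorem snoc (h : G.IsTrail S x e a b) (hab : a ≤ b) {f : E} {w : V} (hf : f ∈ S)
    (hnew : f ∉ (Ico a b).image e) (hjoins : G.Joins f (x b) w) :
    G.IsTrail S (Function.update x (b + 1) w) (Function.update e b f) a (b + 1) := by
  have hIco : Ico a (b + 1) = insert b (Ico a b) := by grind
  have he : ∀ i ∈ Ico a b, Function.update e b f i = e i := fun i hi =>
    Function.update_of_ne (mem_Ico.mp hi).2.ne f e
  have hx : ∀ i ≤ b, Function.update x (b + 1) w i = x i := fun i hi =>
    Function.update_of_ne (by omega) w x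
  refine ⟨?_, ?_, ?_⟩
  · rw [hIco, forall_mem_insert, Function.update_self]
    exact ⟨hf, fun i hi => he i hi ▸ h.mem i hi⟩
  · rw [hIco, forall_mem_insert, Function.update_self, hx b le_rfl, Function.update_self]
    refine ⟨hjoins, fun i hi => ?_⟩
    rw [he i hi, hx i (mem_Ico.mp hi).2.le, hx (i + 1) (mem_Ico.mp hi).2]
    exact h.joins i hi
  · rw [hIco, coe_insert, Set.injOn_insert (by simp)]
    refine ⟨h.injOn.congr fun i hi => (he i hi).symm, ?_⟩
    rw [Function.update_self, Set.image_congr he, ← coe_image]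
    exact hnew

variable [Fintype E] [DecidableEq V]

theorem valencyOn_image (h : G.IsTrail S x e a b) (hab : a ≤ b) (v : V) :
    G.valencyOn ((Ico a b).image e) v + (if x a = v then 1 else 0) =
      2 * #{i ∈ Ico a b | x i = v} + if x b = v then 1 else 0 := by
  have hsum : G.valencyOn ((Ico a b).image e) v =
      ∑ i ∈ Ico a b, ((if x i = v then 1 else 0) + if x (i + 1) = v then 1 else 0) := by
    rw [valencyOn_eq_sum_singleton, sum_image h.injOn]
    exact sum_congr rfl fun i hi => (h.joins i hi).valencyOn_singleton v
  have hshift := sum_Ico_sub (fun i => if x i = v then (1 : ℤ) else 0) hab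
  rw [sum_sub_distrib] at hshift
  rw [hsum, card_filter, sum_add_distrib]
  zify
  linarith

theorem evenOn_image (h : G.IsTrail S x e a b) (hab : a ≤ b) (hclosed : x a = x b) :
    G.EvenOn ((Ico a b).image e) := by
  intro v
  have hval := h.valencyOn_image hab v
  rw [hclosed, Nat.add_right_cancel_iff] at hval
  exact hval ▸ even_two_mul _

theorem exists_longer (h : G.IsTrail S x e a b) (hab : a ≤ b) (hS : G.EvenOn S)
    (hopen : x a ≠ x b) : ∃ x' e', G.IsTrail S x' e' a (b + 1) := by
  set T := (Ico a b).image e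
  have hodd : Odd (G.valencyOn T (x b)) := by
    have hval := h.valencyOn_image hab (x b)
    rw [if_neg hopen, if_pos rfl, add_zero] at hval
    exact ⟨_, hval⟩
  have hsplit : G.valencyOn (S \ T) (x b) + G.valencyOn T (x b) = G.valencyOn S (x b) := by
    rw [valencyOn_eq_sum_singleton (S \ T), valencyOn_eq_sum_singleton T,
      valencyOn_eq_sum_singleton S]
    exact sum_sdiff h.image_subset
  have hrest : G.valencyOn (S \ T) (x b) ≠ 0 := by
    intro hzero
    rw [hzero, zero_add] at hsplit
    exact Nat.not_even_iff_odd.mpr hodd (hsplit ▸ hS (x b))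
  obtain ⟨f, hf, w, hjoins⟩ := exists_joins_of_valencyOn_ne_zero hrest
  exact ⟨_, _, h.snoc hab (mem_sdiff.mp hf).1 (mem_sdiff.mp hf).2 hjoins⟩

theorem isCircuit_image [Fintype V] (h : G.IsTrail S x e a b) (hab : a < b)
    (hclosed : x a = x b) (hx : Set.InjOn x (Ico a b)) : G.IsCircuit ((Ico a b).image e) := by
  set C := (Ico a b).image e
  have hval (v : V) : G.valencyOn C v = 2 * #{i ∈ Ico a b | x i = v} := by
    simpa only [hclosed, Nat.add_right_cancel_iff] using h.valencyOn_image hab.le v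
  have hsupp : ∀ v ∈ G.suppV C, ∃ i ∈ Ico a b, x i = v := by
    intro v hv
    have hcount := hval v ▸ valencyOn_ne_zero_of_mem_suppV hv
    obtain ⟨i, hi⟩ := card_ne_zero.mp (right_ne_zero_of_mul hcount)
    exact ⟨i, mem_filter.mp hi⟩
  have hsymm : Std.Symm (G.AdjOn C) := ⟨fun _ _ ⟨f, hf, hjoins⟩ => ⟨f, hf, Joins.symm hjoins⟩⟩
  have hreach : ∀ i ∈ Ico a b, Relation.ReflTransGen (G.AdjOn C) (x a) (x i) := fun i hi =>
    h.reflTransGen (mem_Ico.mp hi).1 (mem_Ico.mp hi).2.le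
  refine ⟨(nonempty_Ico.mpr hab).image e, ?_, ?_⟩
  · intro u hu v hv
    obtain ⟨i, hi, rfl⟩ := hsupp u hu
    obtain ⟨j, hj, rfl⟩ := hsupp v hv
    exact (Relation.ReflTransGen.stdSymm.symm _ _ (hreach i hi)).trans (hreach j hj)
  · intro v hv
    obtain ⟨i, hi, rfl⟩ := hsupp v hv
    have honce : {j ∈ Ico a b | x j = x i} = {i} := by
      ext j
      rw [mem_filter, mem_singleton]
      exact ⟨fun hj => hx hj.1 hi hj.2, by rintro rfl; exact ⟨hi, rfl⟩⟩
    rw [hval, honce, card_singleton]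

end IsTrail

theorem exists_isTrail_maximal (G : SignedGraph V E) (hS : S.Nonempty) :
    ∃ n > 0, (∃ x e a, G.IsTrail S x e a (a + n)) ∧
      ¬ ∃ x e a, G.IsTrail S x e a (a + (n + 1)) := by
  by_contra! hlonger
  have hall : ∀ n > 0, ∃ x e a, G.IsTrail S x e a (a + n) := by
    intro n hn
    induction n, hn using Nat.le_induction with
    | base =>
      obtain ⟨f, hf⟩ := hS
      refine ⟨fun i => G.ends f (i != 0), fun _ => f, 0, fun _ _ => hf, ?_, ?_⟩
      · rintro i hi
        obtain rfl : i = 0 := by grind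
        exact ⟨false, rfl, rfl⟩
      · simp
    | succ n hn ih => exact hlonger n hn ih
  obtain ⟨x, e, a, h⟩ := hall (#S + 1) (Nat.succ_pos _)
  have := h.length_le_card
  omega

variable [Fintype E] [DecidableEq V] [DecidableEq E]

theorem EvenOn.exists_closed_isTrail_maximal (hS : G.EvenOn S) (hne : S.Nonempty) :
    ∃ n > 0, (∃ x e a, G.IsTrail S x e a (a + n) ∧ x a = x (a + n)) ∧
      ¬ ∃ x e a, G.IsTrail S x e a (a + (n + 1)) := by
  obtain ⟨n, hn, ⟨x, e, a, h⟩, hmax⟩ := G.exists_isTrail_maximal hne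
  refine ⟨n, hn, ⟨x, e, a, h, by_contra fun hopen => hmax ?_⟩, hmax⟩
  obtain ⟨x', e', h'⟩ := h.exists_longer (Nat.le_add_right a n) hS hopen
  exact ⟨x', e', a, h'⟩

variable [Fintype V]

theorem EvenOn.exists_isCircuit_subset (hS : G.EvenOn S) (hne : S.Nonempty) :
    ∃ C ⊆ S, G.IsCircuit C := by
  classical
  have hex : ∃ n > 0, ∃ x e a, G.IsTrail S x e a (a + n) ∧ x a = x (a + n) := by
    obtain ⟨n, hn, h, -⟩ := hS.exists_closed_isTrail_maximal hne
    exact ⟨n, hn, h⟩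
  obtain ⟨hn, x, e, a, h, hclosed⟩ := Nat.find_spec hex
  set n := Nat.find hex
  have hdistinct : ∀ i j, a ≤ i → i < j → j < a + n → x i ≠ x j := by
    intro i j hai hij hj hxij
    refine Nat.find_min hex (m := j - i) (by omega) ⟨by omega, x, e, i, ?_⟩
    rw [Nat.add_sub_cancel' hij.le]
    exact ⟨h.mono hai hj.le, hxij⟩
  have hx : Set.InjOn x (Ico a (a + n)) := by
    intro i hi j hj hxij
    rw [mem_coe, mem_Ico] at hi hj
    by_contra hne
    rcases lt_or_gt_of_ne hne with hij | hji
    · exact hdistinct i j hi.1 hij hj.2 hxij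
    · exact hdistinct j i hj.1 hji hi.2 hxij.symm
  exact ⟨_, h.image_subset, h.isCircuit_image (by omega) hclosed hx⟩

theorem IsCircuit.evenOn (h : G.IsCircuit S) : G.EvenOn S := by
  intro v
  by_cases hv : v ∈ G.suppV S
  · exact h.2.2 v hv ▸ even_two
  · have hzero : G.valencyOn S v = 0 := by
      by_contra hne
      obtain ⟨e, he, _, i, hi, -⟩ := exists_joins_of_valencyOn_ne_zero hne
      exact hv (mem_filter.mpr ⟨mem_univ v, e, he, i, hi⟩)
    exact hzero ▸ Even.zero

theorem UnbalancedEvenOn.exists_isUnbalancedCircuit_subset (hS : G.UnbalancedEvenOn S) :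
    ∃ C ⊆ S, G.IsUnbalancedCircuit C := by
  induction S using Finset.strongInduction with
  | H S ih =>
    have hne : S.Nonempty := by
      rw [nonempty_iff_ne_empty]
      rintro rfl
      exact absurd hS.2 (by rw [signOf, prod_empty]; decide)
    obtain ⟨C, hCS, hC⟩ := hS.1.exists_isCircuit_subset hne
    rcases Int.units_eq_one_or (G.signOf C) with hpos | hneg
    · obtain ⟨D, hD, hD'⟩ := ih (S \ C) (sdiff_ssubset hCS hC.1)
        (hS.sdiff ⟨hC.evenOn, hpos⟩ hCS)
      exact ⟨D, hD.trans sdiff_subset, hD'⟩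
    · exact ⟨C, hCS, hC, hneg⟩

end Trail

/-! ### Euler tours -/

section EulerTour

/-- The indices `j, …, j + n` trace, for every `j`, the same closed trail of length `n` in `S`,
started at its `j`-th vertex: the cyclic sequences of vertices and edges of the closed trail are
unrolled to periodic sequences, so that rotating the trail amounts to shifting the index. -/
structure IsClosedTrail (G : SignedGraph V E) (S : Finset E) (x : ℕ → V) (e : ℕ → E) (n : ℕ) :
    Prop where
  periodic_vertex : Function.Periodic x n
  periodic_edge : Function.Periodic e n
  isTrail : ∀ j, G.IsTrail S x e j (j + n)

theorem IsTrail.exists_isClosedTrail {x : ℕ → V} {e : ℕ → E} {a n : ℕ}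
    (h : G.IsTrail S x e a (a + n)) (hn : 0 < n) (hclosed : x a = x (a + n)) :
    ∃ x' e', G.IsClosedTrail S x' e' n := by
  have hmem (i : ℕ) : a + i % n ∈ Ico a (a + n) := by
    have := Nat.mod_lt i hn
    grind
  have hsucc (i : ℕ) : x (a + (i + 1) % n) = x (a + i % n + 1) := by
    rw [← Nat.mod_add_mod]
    have hle : i % n + 1 ≤ n := Nat.mod_lt i hn
    rcases hle.eq_or_lt with hwrap | hlt
    · rw [add_assoc, hwrap, Nat.mod_self, add_zero, hclosed]
    · rw [Nat.mod_eq_of_lt hlt, add_assoc]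
  refine ⟨fun i => x (a + i % n), fun i => e (a + i % n), fun i => ?_, fun i => ?_, fun j => ?_⟩
  · simp only [Nat.add_mod_right]
  · simp only [Nat.add_mod_right]
  · refine ⟨fun i _ => h.mem _ (hmem i), fun i _ => ?_, fun i hi k hk hik => ?_⟩
    · exact hsucc i ▸ h.joins _ (hmem i)
    · exact Nat.mod_injOn_Ico j n hi hk (Nat.add_left_cancel (h.injOn (hmem i) (hmem k) hik))

theorem IsClosedTrail.joins {x : ℕ → V} {e : ℕ → E} {n : ℕ} (h : G.IsClosedTrail S x e n)
    (hn : 0 < n) (i : ℕ) : G.Joins (e i) (x i) (x (i + 1)) :=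
  (h.isTrail i).joins i (left_mem_Ico.mpr (Nat.lt_add_of_pos_right hn))

theorem IsClosedTrail.exists_eq_of_joins {x : ℕ → V} {e : ℕ → E} {n : ℕ}
    (h : G.IsClosedTrail S x e n) (hmax : ¬ ∃ x e a, G.IsTrail S x e a (a + (n + 1)))
    {f : E} (hf : f ∈ S) {j : ℕ} {w : V} (hjoins : G.Joins f (x j) w) : ∃ i, e i = f := by
  classical
  by_contra! hunused
  have hnew : f ∉ (Ico j (j + n)).image e := fun hmem => by
    obtain ⟨i, -, hi⟩ := mem_image.mp hmem
    exact hunused i hi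
  have hjoins' : G.Joins f (x (j + n)) w := (h.periodic_vertex j).symm ▸ hjoins
  exact hmax ⟨_, _, j, (h.isTrail j).snoc (Nat.le_add_right j n) hf hnew hjoins'⟩

theorem IsClosedTrail.eq_card_of_surjective [Fintype E] {x : ℕ → V} {e : ℕ → E} {n : ℕ}
    (h : G.IsClosedTrail univ x e n) (hn : 0 < n) (he : Function.Surjective e) :
    n = Fintype.card E := by
  classical
  have hle : n ≤ #(univ : Finset E) := by
    simpa only [Nat.add_sub_cancel_left] using (h.isTrail 0).length_le_card
  have hsurj : (range n).image e = univ := eq_univ_of_forall fun f => by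
    obtain ⟨i, rfl⟩ := he f
    exact mem_image.mpr ⟨i % n, mem_range.mpr (Nat.mod_lt i hn), h.periodic_edge.map_mod_nat i⟩
  have hge : #((range n).image e) ≤ n := card_image_le.trans (card_range n).le
  exact hle.antisymm (hsurj ▸ hge)

theorem Eulerian.exists_isClosedTrail [Fintype E] [Nonempty E] [DecidableEq V] [DecidableEq E]
    (hG : G.Eulerian) :
    ∃ x e, G.IsClosedTrail univ x e (Fintype.card E) := by
  have heven : G.EvenOn univ := hG.2
  obtain ⟨n, hn, ⟨x₀, e₀, a, h₀, hclosed⟩, hmax⟩ :=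
    heven.exists_closed_isTrail_maximal univ_nonempty
  obtain ⟨x, e, h⟩ := h₀.exists_isClosedTrail hn hclosed
  have hvisited (v : V) : ∃ i, x i = v := by
    induction hG.1.2 (x 0) v with
    | refl => exact ⟨0, rfl⟩
    | tail _ hadj ih =>
      obtain ⟨i, rfl⟩ := ih
      obtain ⟨f, hf, hfjoins⟩ := hadj
      obtain ⟨k, rfl⟩ := h.exists_eq_of_joins hmax hf hfjoins
      rcases Joins.right_eq hfjoins (h.joins hn k) with hw | hw
      exacts [⟨k, hw.symm⟩, ⟨k + 1, hw.symm⟩]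
  have hsurj : Function.Surjective e := fun f => by
    obtain ⟨j, hj⟩ := hvisited (G.ends f false)
    exact h.exists_eq_of_joins hmax (mem_univ f) (w := G.ends f true) ⟨false, hj.symm, rfl⟩
  exact ⟨x, e, h.eq_card_of_surjective hn hsurj ▸ h⟩

end EulerTour

/-! ### Switching and flows -/

section Switching

/-- The sign of the edge `e` after switching `G` at the vertices where `g` is `-1`. -/
def switchedSign (G : SignedGraph V E) (g : V → ℤˣ) (e : E) : ℤˣ :=
  g (G.ends e false) * g (G.ends e true) * G.sign e

theorem Joins.switchedSign_eq {e : E} {u v : V} (h : G.Joins e u v) (g : V → ℤˣ) :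
    G.switchedSign g e = g u * g v * G.sign e := by
  obtain ⟨i, rfl, rfl⟩ := h
  cases i
  · rfl
  · rw [switchedSign, Bool.not_true, mul_comm (g _)]

/-- The coefficient with which the half-edge `(e, i)` enters Kirchhoff's law at its
end-vertex. -/
def Orientation.dirSign (O : G.Orientation) (e : E) (i : Bool) : ℤˣ :=
  if O.dir e i then 1 else -1

theorem Orientation.dirSign_mul_dirSign (O : G.Orientation) (e : E) :
    O.dirSign e false * O.dirSign e true = -G.sign e := by
  have hcompat := O.compat e
  rcases Int.units_eq_one_or (G.sign e) with hs | hs <;>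
    cases hfalse : O.dir e false <;> cases htrue : O.dir e true <;>
      simp_all [dirSign]

variable {A : Type} [AddCommGroup A] [Fintype E] [DecidableEq V]
  {O : G.Orientation} {φ : E → A}

theorem IsFlow.sum_smul_eq_zero (h : G.IsFlow O φ) (g : V → ℤˣ) :
    ∑ e, ((g (G.ends e true) * O.dirSign e true) • φ e +
      (g (G.ends e false) * O.dirSign e false) • φ e) = 0 := by
  have hvertex (v : V) : ∑ p : E × Bool with G.ends p.1 p.2 = v,
      (g (G.ends p.1 p.2) * O.dirSign p.1 p.2) • φ p.1 = 0 := by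
    rw [← smul_zero (g v), ← h v, smul_sum]
    refine sum_congr rfl fun p hp => ?_
    rw [(mem_filter.mp hp).2, mul_smul, Orientation.dirSign]
    split_ifs <;> simp only [one_smul, Units.neg_smul]
  have hsum := sum_fiberwise_of_maps_to
    (fun p (hp : p ∈ univ) => mem_image_of_mem (fun p : E × Bool => G.ends p.1 p.2) hp)
    fun p => (g (G.ends p.1 p.2) * O.dirSign p.1 p.2) • φ p.1
  simpa only [hvertex, sum_const_zero, Fintype.sum_prod_type, Fintype.sum_bool] using hsum.symm

theorem IsFlow.two_nsmul_eq_zero (h : G.IsFlow O φ) {g : V → ℤˣ} {f : E}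
    (hf : G.switchedSign g f = -1) (hrest : ∀ e ≠ f, G.switchedSign g e = 1) :
    2 • φ f = 0 := by
  have hhalves (e : E) : g (G.ends e false) * O.dirSign e false =
      -G.switchedSign g e * (g (G.ends e true) * O.dirSign e true) := by
    have hprod : g (G.ends e false) * O.dirSign e false *
        (g (G.ends e true) * O.dirSign e true) = -G.switchedSign g e := by
      rw [mul_mul_mul_comm, O.dirSign_mul_dirSign, mul_neg, switchedSign]
    rw [← hprod, mul_assoc, Int.units_mul_self, mul_one]
  have hsum := h.sum_smul_eq_zero g
  have hother : ∀ e ∈ univ, e ≠ f → (g (G.ends e true) * O.dirSign e true) • φ e +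
      (g (G.ends e false) * O.dirSign e false) • φ e = 0 := by
    intro e _ he
    rw [hhalves, hrest e he, neg_one_mul, Units.neg_smul, add_neg_cancel]
  rw [sum_eq_single f hother (by simp), hhalves f, hf, neg_neg, one_mul, ← two_nsmul] at hsum
  rwa [smul_comm, smul_eq_zero_iff_eq] at hsum

end Switching

/-! ### Balanced arcs of an Euler tour -/

section BalancedArc

/-- The sign of the initial segment of length `i` of the edge sequence `e`. -/
def prefixSign (G : SignedGraph V E) (e : ℕ → E) (i : ℕ) : ℤˣ :=
  ∏ j ∈ range i, G.sign (e j)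

theorem prefixSign_succ (e : ℕ → E) (i : ℕ) :
    G.prefixSign e (i + 1) = G.prefixSign e i * G.sign (e i) :=
  prod_range_succ _ _

/-- The indices from `a` to `b` trace a closed trail of sign `1` of length less than `n`; its sign
is the quotient of the prefix signs. -/
structure IsBalancedArc (G : SignedGraph V E) (x : ℕ → V) (e : ℕ → E) (n a b : ℕ) : Prop where
  le : a ≤ b
  lt_add : b < a + n
  closed : x a = x b
  prefixSign_eq : G.prefixSign e a = G.prefixSign e b

variable {x : ℕ → V} {e : ℕ → E}

theorem IsTrail.signOf_image [DecidableEq E] {a b : ℕ} (h : G.IsTrail S x e a b) (hab : a ≤ b) :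
    G.signOf ((Ico a b).image e) = G.prefixSign e a * G.prefixSign e b := by
  rw [signOf, prod_image h.injOn, prod_Ico_eq_div _ hab, div_eq_mul_inv, mul_comm,
    Int.units_inv_eq_self, prefixSign, prefixSign]

theorem IsClosedTrail.balancedEvenOn_image [Fintype E] [DecidableEq V] [DecidableEq E]
    {n a b : ℕ} (h : G.IsClosedTrail S x e n) (harc : G.IsBalancedArc x e n a b) :
    G.BalancedEvenOn ((Ico a b).image e) := by
  have htrail := (h.isTrail a).mono le_rfl harc.lt_add.le
  refine ⟨htrail.evenOn_image harc.le harc.closed, ?_⟩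
  rw [htrail.signOf_image harc.le, harc.prefixSign_eq, Int.units_mul_self]

variable [Fintype E]

theorem IsClosedTrail.image_Ico_eq_univ [DecidableEq E]
    (h : G.IsClosedTrail univ x e (Fintype.card E)) (j : ℕ) :
    (Ico j (j + Fintype.card E)).image e = univ := by
  apply eq_univ_of_card
  rw [card_image_of_injOn (h.isTrail j).injOn, Nat.card_Ico, Nat.add_sub_cancel_left]

theorem IsClosedTrail.prefixSign_add_card (h : G.IsClosedTrail univ x e (Fintype.card E))
    (huniv : G.signOf univ = -1) (j : ℕ) :
    G.prefixSign e (j + Fintype.card E) = -G.prefixSign e j := by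
  classical
  have hwindow := (h.isTrail j).signOf_image (Nat.le_add_right j _)
  rw [h.image_Ico_eq_univ, huniv] at hwindow
  rw [← mul_neg_one, hwindow, ← mul_assoc, Int.units_mul_self, one_mul]

/- Two visits `j < k` of the window `(p, p + |E|]` to a vertex with distinct prefix signs would make
`k, …, j + |E|` a balanced arc around `p + |E|`, because one more turn changes the prefix sign. -/
theorem IsClosedTrail.exists_potential (h : G.IsClosedTrail univ x e (Fintype.card E))
    (huniv : G.signOf univ = -1) {p : ℕ}
    (hp : ∀ a b, G.IsBalancedArc x e (Fintype.card E) a b → a ≤ p + Fintype.card E →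
      b ≤ p + Fintype.card E) :
    ∃ g : V → ℤˣ, ∀ i ∈ Ioc p (p + Fintype.card E), g (x i) = G.prefixSign e i := by
  have hlt : ∀ j ∈ Ioc p (p + Fintype.card E), ∀ k ∈ Ioc p (p + Fintype.card E), j < k →
      x j = x k → G.prefixSign e j = G.prefixSign e k := by
    intro j hj k hk hjk hx
    rw [mem_Ioc] at hj hk
    by_contra hne
    have harc : G.IsBalancedArc x e (Fintype.card E) k (j + Fintype.card E) := by
      refine ⟨by omega, by omega, hx.symm.trans (h.periodic_vertex j).symm, ?_⟩
      rw [h.prefixSign_add_card huniv, Int.units_ne_iff_eq_neg.mp (Ne.symm hne)]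
    have := hp _ _ harc hk.2
    omega
  have hfactors : Function.FactorsThrough
      (fun i : Ioc p (p + Fintype.card E) => G.prefixSign e i) fun i => x i := by
    intro j k hx
    rcases lt_trichotomy j k with hjk | rfl | hkj
    · exact hlt j j.2 k k.2 hjk hx
    · rfl
    · exact (hlt k k.2 j j.2 hkj hx.symm).symm
  exact ⟨_, fun i hi => hfactors.extend_apply 1 ⟨i, hi⟩⟩

theorem IsClosedTrail.exists_isBalancedArc {A : Type} [AddCommGroup A] [DecidableEq V]
    (h : G.IsClosedTrail univ x e (Fintype.card E)) (huniv : G.signOf univ = -1)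
    {O : G.Orientation} {φ : E → A} (hφ : G.IsFlow O φ) (hne : ∀ f, 2 • φ f ≠ 0)
    {p : ℕ} (hp : Fintype.card E ≤ p) :
    ∃ a b, G.IsBalancedArc x e (Fintype.card E) a b ∧ a ≤ p ∧ p < b := by
  classical
  obtain ⟨p, rfl⟩ := Nat.exists_eq_add_of_le' hp
  by_contra! hnone
  obtain ⟨g, hg⟩ := h.exists_potential huniv hnone
  have hcard : 0 < Fintype.card E := Fintype.card_pos_iff.mpr ⟨e 0⟩
  have hjoins := h.joins hcard
  refine hne (e p) (hφ.two_nsmul_eq_zero (g := g) ?_ fun f hf => ?_)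
  · have hfirst := hjoins p
    rw [← h.periodic_vertex p] at hfirst
    rw [hfirst.switchedSign_eq, hg _ (by grind), hg _ (by grind), h.prefixSign_add_card huniv,
      prefixSign_succ, neg_mul, ← mul_assoc, Int.units_mul_self, one_mul, neg_mul,
      Int.units_mul_self]
  · obtain ⟨i, hi, rfl⟩ := mem_image.mp (h.image_Ico_eq_univ p ▸ mem_univ f)
    have hip : i ≠ p := by rintro rfl; exact hf rfl
    rw [(hjoins i).switchedSign_eq, hg _ (by grind), hg _ (by grind), prefixSign_succ,
      ← mul_assoc, Int.units_mul_self, one_mul, Int.units_mul_self]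

end BalancedArc

/-! ### Cyclic chains of arcs -/

section ArcCycle

/-- The intervals `[a i, b i)` with `i ≤ n`, all of them arcs, cover a circle of circumference `m`
in cyclic order: `overlap` says that successive intervals leave no gap and `wrap` that the last
one reaches the first one again. By the remaining conditions only cyclic neighbours meet, and
never three intervals at a point. The values of `a` and `b` beyond `n` only spare case
distinctions. -/
structure IsArcCycle (Arc : ℕ → ℕ → Prop) (m n : ℕ) (a b : ℕ → ℕ) : Prop where
  arc : ∀ i, Arc (a i) (b i)
  strictMono : StrictMono a
  overlap : ∀ i, a (i + 1) ≤ b i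
  skip : ∀ i, b i < a (i + 2)
  wrap : a 0 + m ≤ b n
  lt_wrap : ∀ i < n, b i < a 0 + m
  last_lt : b n < a 1 + m

variable {Arc : ℕ → ℕ → Prop} {m : ℕ}

theorem exists_furthest_arc (hbdd : ∀ a b, Arc a b → b < a + m) {p : ℕ}
    (hcover : ∃ a b, Arc a b ∧ a ≤ p ∧ p < b) :
    ∃ a b, Arc a b ∧ a ≤ p ∧ p < b ∧ ∀ a' b', Arc a' b' → a' ≤ p → b' ≤ b := by
  classical
  have hbound : ∀ a b, Arc a b → a ≤ p → b ≤ p + m := fun a b harc ha => by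
    have := hbdd a b harc
    omega
  obtain ⟨a₀, b₀, harc₀, ha₀, hb₀⟩ := hcover
  obtain ⟨a, harc, ha⟩ := Nat.findGreatest_spec (P := fun b => ∃ a, Arc a b ∧ a ≤ p)
    (hbound a₀ b₀ harc₀ ha₀) ⟨a₀, harc₀, ha₀⟩
  have hmax : ∀ a' b', Arc a' b' → a' ≤ p →
      b' ≤ Nat.findGreatest (fun b => ∃ a, Arc a b ∧ a ≤ p) (p + m) := fun a' b' harc' ha' =>
    Nat.le_findGreatest (hbound a' b' harc' ha') ⟨a', harc', ha'⟩
  exact ⟨a, _, harc, ha, hb₀.trans_le (hmax a₀ b₀ harc₀ ha₀), hmax⟩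

/- Choose greedily an arc around the end of the previous one that reaches as far as possible: an arc
that started before the end of the previous one could have been chosen one step earlier. -/
theorem exists_greedy_arcs (hbdd : ∀ a b, Arc a b → b < a + m)
    (hcover : ∀ p ≥ m, ∃ a b, Arc a b ∧ a ≤ p ∧ p < b) :
    ∃ a b : ℕ → ℕ, (∀ i, Arc (a i) (b i)) ∧ StrictMono a ∧ (∀ i, a (i + 1) ≤ b i) ∧
      (∀ i, b i < a (i + 2)) ∧ StrictMono b := by
  have hfurthest : ∀ p, m ≤ p → _ := fun p hp => exists_furthest_arc hbdd (hcover p hp)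
  choose! L R harc hL hR hmax using hfurthest
  let P : ℕ → ℕ := fun i => R^[i] m
  have hPsucc (i : ℕ) : P (i + 1) = R (P i) := Function.iterate_succ_apply' R i m
  have hP (i : ℕ) : m ≤ P i := by
    induction i with
    | zero => exact le_rfl
    | succ i ih => exact hPsucc i ▸ ih.trans (hR _ ih).le
  have harcP (i : ℕ) : Arc (L (P i)) (P (i + 1)) := hPsucc i ▸ harc _ (hP i)
  have hlt (i : ℕ) : P i < P (i + 1) := hPsucc i ▸ hR _ (hP i)
  have hskip (i : ℕ) : P i < L (P (i + 1)) := by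
    by_contra! hle
    have hreach := hmax (P i) (hP i) _ _ (harcP (i + 1)) hle
    rw [← hPsucc] at hreach
    exact (hlt (i + 1)).not_ge hreach
  exact ⟨fun i => L (P i), fun i => P (i + 1), harcP,
    strictMono_nat_of_lt_succ fun i => (hL _ (hP i)).trans_lt (hskip i),
    fun i => hL _ (hP (i + 1)), fun i => hskip (i + 1),
    strictMono_nat_of_lt_succ fun i => hlt (i + 1)⟩

/- Among all stretches of the greedy sequence of arcs that go around the circle, take one with the
least number of arcs. -/
theorem exists_isArcCycle (hbdd : ∀ a b, Arc a b → b < a + m)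
    (hcover : ∀ p ≥ m, ∃ a b, Arc a b ∧ a ≤ p ∧ p < b) :
    ∃ n a b, IsArcCycle Arc m n a b := by
  classical
  obtain ⟨a, b, harc, ha, hoverlap, hskip, hb⟩ := exists_greedy_arcs hbdd hcover
  have hwrap : ∃ n s, a s + m ≤ b (s + n) := ⟨a 0 + m, 0, hb.le_apply.trans_eq (by rw [zero_add])⟩
  obtain ⟨s, hs⟩ := Nat.find_spec hwrap
  have hmin : ∀ i < Nat.find hwrap, ∀ t, b (t + i) < a t + m := by
    simpa only [not_exists, not_le] using fun i => Nat.find_min hwrap (m := i)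
  set n := Nat.find hwrap
  have hn : n ≠ 0 := by
    intro hn
    have := hbdd _ _ (harc s)
    rw [hn, add_zero] at hs
    omega
  refine ⟨n, fun i => a (s + i), fun i => b (s + i), fun i => harc _, fun i j hij => ha (by omega),
    fun i => hoverlap _, fun i => hskip _, hs, fun i hi => hmin i hi s, ?_⟩
  obtain ⟨k, hk⟩ := Nat.exists_eq_succ_of_ne_zero hn
  have hlast := hmin k (by omega) (s + 1)
  rwa [add_right_comm, add_assoc, ← Nat.succ_eq_add_one, ← hk] at hlast

namespace IsArcCycle

variable {n : ℕ} {a b : ℕ → ℕ}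

theorem exists_mem (h : IsArcCycle Arc m n a b) {p : ℕ} (hp : p ∈ Ico (a 0) (a 0 + m)) :
    ∃ i ≤ n, p ∈ Ico (a i) (b i) := by
  classical
  rw [mem_Ico] at hp
  have hlast : p < b n := hp.2.trans_le h.wrap
  have hex : ∃ i, p < b i := ⟨n, hlast⟩
  obtain ⟨i, hin, hpi, hmin⟩ : ∃ i ≤ n, p < b i ∧ ∀ j < i, b j ≤ p :=
    ⟨Nat.find hex, Nat.find_min' hex hlast, Nat.find_spec hex,
      fun j hj => not_lt.mp (Nat.find_min hex hj)⟩
  refine ⟨i, hin, mem_Ico.mpr ⟨?_, hpi⟩⟩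
  cases i with
  | zero => exact hp.1
  | succ i => exact (h.overlap i).trans (hmin i i.lt_succ_self)

theorem eq_succ_of_mem (h : IsArcCycle Arc m n a b) {p i j : ℕ} (hij : i < j)
    (hi : p ∈ Ico (a i) (b i)) (hj : p ∈ Ico (a j) (b j)) : j = i + 1 := by
  by_contra hne
  have hskip : b i < a j := (h.skip i).trans_le (h.strictMono.monotone (by omega))
  rw [mem_Ico] at hi hj
  omega

theorem Ico_subset (h : IsArcCycle Arc m n a b) {i : ℕ} (hi : i < n) :
    Ico (a i) (b i) ⊆ Ico (a 0) (a 0 + m) :=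
  Ico_subset_Ico (h.strictMono.monotone i.zero_le) (h.lt_wrap i hi).le

end IsArcCycle

end ArcCycle

/-! ### Three balanced even sets covering the tour -/

section Cover

variable {x : ℕ → V} {e : ℕ → E} {m n : ℕ} {a b : ℕ → ℕ}

theorem IsClosedTrail.eq_of_edge_eq (h : G.IsClosedTrail S x e m)
    {Arc : ℕ → ℕ → Prop} (hcycle : IsArcCycle Arc m n a b) {i j p q : ℕ} (hi : i < n)
    (hj : j < n) (hp : p ∈ Ico (a i) (b i)) (hq : q ∈ Ico (a j) (b j)) (hpq : e p = e q) :
    p = q :=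
  (h.isTrail (a 0)).injOn (hcycle.Ico_subset hi hp) (hcycle.Ico_subset hj hq) hpq

variable [DecidableEq E]

theorem IsClosedTrail.notMem_image_last (h : G.IsClosedTrail S x e m)
    {Arc : ℕ → ℕ → Prop} (hcycle : IsArcCycle Arc m n a b) {i j p : ℕ} (hij : i < j) (hj : j < n)
    (hpi : p ∈ Ico (a i) (b i)) (hpj : p ∈ Ico (a j) (b j)) :
    e p ∉ (Ico (a n) (b n)).image e := by
  intro hmem
  obtain ⟨q, hq, hqp⟩ := mem_image.mp hmem
  have hp := hcycle.Ico_subset hj hpj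
  have h0n : a 0 ≤ a n := hcycle.strictMono.monotone n.zero_le
  have h1j : a 1 ≤ a j := hcycle.strictMono.monotone (by omega)
  have hlast := hcycle.last_lt
  rcases lt_or_ge q (a 0 + m) with hfirst | hsecond
  · have hqp : q = p := (h.isTrail (a 0)).injOn (by grind) hp hqp
    have := hcycle.eq_succ_of_mem (hij.trans hj) hpi (hqp ▸ hq)
    omega
  · obtain ⟨r, rfl⟩ := Nat.exists_eq_add_of_le' ((Nat.le_add_left m (a 0)).trans hsecond)
    have hrp : r = p := (h.isTrail (a 0)).injOn (by grind) hp (h.periodic_edge r ▸ hqp)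
    grind

variable [Fintype E] [DecidableEq V]

theorem IsClosedTrail.balancedEvenOn_biUnion (h : G.IsClosedTrail S x e m)
    (hcycle : IsArcCycle (G.IsBalancedArc x e m) m n a b) {I : Finset ℕ} (hI : ∀ i ∈ I, i < n)
    (hsep : ∀ i ∈ I, i + 1 ∉ I) :
    G.BalancedEvenOn (I.biUnion fun i => (Ico (a i) (b i)).image e) := by
  have hdisj : ∀ i ∈ I, ∀ j ∈ I, i < j →
      Disjoint ((Ico (a i) (b i)).image e) ((Ico (a j) (b j)).image e) := by
    intro i hi j hj hij
    rw [disjoint_left]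
    intro f hfi hfj
    obtain ⟨p, hp, rfl⟩ := mem_image.mp hfi
    obtain ⟨q, hq, hqp⟩ := mem_image.mp hfj
    obtain rfl := h.eq_of_edge_eq hcycle (hI j hj) (hI i hi) hq hp hqp
    exact hsep i hi (hcycle.eq_succ_of_mem hij hp hq ▸ hj)
  refine .biUnion (fun i hi j hj hij => ?_) fun i _ => h.balancedEvenOn_image (hcycle.arc i)
  rcases lt_or_gt_of_ne hij with hlt | hgt
  exacts [hdisj i hi j hj hlt, (hdisj j hj i hi hgt).symm]

theorem IsClosedTrail.exists_balancedEvenOn_cover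
    (h : G.IsClosedTrail univ x e (Fintype.card E))
    (hcycle : IsArcCycle (G.IsBalancedArc x e (Fintype.card E)) (Fintype.card E) n a b) :
    ∃ X Y Z, G.BalancedEvenOn X ∧ G.BalancedEvenOn Y ∧ G.BalancedEvenOn Z ∧
      (∀ f, f ∈ X ∨ f ∈ Y ∨ f ∈ Z) ∧ ∀ f ∈ X, f ∈ Y → f ∉ Z := by
  refine ⟨{i ∈ range n | Even i}.biUnion fun i => (Ico (a i) (b i)).image e,
    {i ∈ range n | Odd i}.biUnion fun i => (Ico (a i) (b i)).image e, (Ico (a n) (b n)).image e,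
    h.balancedEvenOn_biUnion hcycle (by grind) (by grind),
    h.balancedEvenOn_biUnion hcycle (by grind) (by grind),
    h.balancedEvenOn_image (hcycle.arc n), fun f => ?_, fun f hX hY => ?_⟩
  · obtain ⟨p, hp, rfl⟩ := mem_image.mp (h.image_Ico_eq_univ (a 0) ▸ mem_univ f)
    obtain ⟨i, hin, hpi⟩ := hcycle.exists_mem hp
    have hmem := mem_image_of_mem e hpi
    rcases hin.eq_or_lt with rfl | hlt
    · exact .inr (.inr hmem)
    · rcases i.even_or_odd with heven | hodd
      · exact .inl (mem_biUnion.mpr ⟨i, by grind, hmem⟩)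
      · exact .inr (.inl (mem_biUnion.mpr ⟨i, by grind, hmem⟩))
  · obtain ⟨i, hi, hfi⟩ := mem_biUnion.mp hX
    obtain ⟨j, hj, hfj⟩ := mem_biUnion.mp hY
    obtain ⟨p, hp, rfl⟩ := mem_image.mp hfi
    obtain ⟨q, hq, hqp⟩ := mem_image.mp hfj
    rw [mem_filter, mem_range] at hi hj
    obtain rfl := h.eq_of_edge_eq hcycle hj.1 hi.1 hq hp hqp
    rcases lt_trichotomy i j with hij | rfl | hji
    · exact h.notMem_image_last hcycle hij hj.1 hp hq
    · exact absurd hi.2 (Nat.not_even_iff_odd.mpr hj.2)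
    · exact h.notMem_image_last hcycle hji hi.1 hq hp

end Cover

end SignedGraph

theorem stmt10_general {V E A : Type} [Fintype V] [Fintype E] [DecidableEq V] [DecidableEq E]
    [AddCommGroup A] (G : SignedGraph V E) (hG : G.Eulerian) {O : G.Orientation} {φ : E → A}
    (hφ : G.IsFlow O φ) (hne : ∀ e, 2 • φ e ≠ 0) (hodd : Odd #(G.negEdges univ)) :
    ∃ S₁ S₂ : Finset E,
      G.IsUnbalancedCircuit S₁ ∧ G.IsUnbalancedCircuit S₂ ∧ Disjoint S₁ S₂ := by
  have hsign : G.signOf univ = -1 := SignedGraph.signOf_eq_neg_one_of_odd_card_negEdges hodd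
  have hE : Nonempty E := (card_pos.mp hodd.pos).to_type
  obtain ⟨x, e, htour⟩ := hG.exists_isClosedTrail
  obtain ⟨n, a, b, hcycle⟩ := SignedGraph.exists_isArcCycle (fun _ _ harc => harc.lt_add)
    fun _ hp => htour.exists_isBalancedArc hsign hφ hne hp
  obtain ⟨X, Y, Z, hX, hY, hZ, hcover, hinter⟩ := htour.exists_balancedEvenOn_cover hcycle
  obtain ⟨S₁, S₂, hS₁, hS₂, hdisj⟩ := SignedGraph.exists_disjoint_unbalancedEvenOn_of_cover
    ⟨hG.2, hsign⟩ hX hY hZ hcover hinter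
  obtain ⟨C₁, hC₁S₁, hC₁⟩ := hS₁.exists_isUnbalancedCircuit_subset
  obtain ⟨C₂, hC₂S₂, hC₂⟩ := hS₂.exists_isUnbalancedCircuit_subset
  exact ⟨C₁, C₂, hC₁, hC₂, disjoint_of_subset_left hC₁S₁ (disjoint_of_subset_right hC₂S₂ hdisj)⟩

open SignedGraph Finset in
/-- Every flow-admissible signed eulerian graph with an odd
number of negative edges contains two edge-disjoint unbalanced circuits. -/
theorem stmt10 {V E : Type} [Fintype V] [Fintype E] [DecidableEq V]
    [DecidableEq E] (G : SignedGraph V E) (hG : G.Eulerian)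
    (hadm : G.FlowAdmissible) (hodd : Odd (G.negEdges univ).card) :
    ∃ S₁ S₂ : Finset E,
      G.IsUnbalancedCircuit S₁ ∧ G.IsUnbalancedCircuit S₂ ∧
      Disjoint S₁ S₂ := by
  obtain ⟨O, φ, hφ, hne⟩ := hadm
  exact stmt10_general G hG hφ (fun e => smul_ne_zero two_ne_zero (hne e)) hodd
end

section
/- Every connected 6-regular graph of odd order can be decomposed into three edge-disjoint eulerian subgraphs sharing a common vertex such that each of them has an odd number of edges. -/
open Finset

/-- A multigraph on vertex type `V` with edge type `E`: each edge `e`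
consists of two half-edges indexed by `Bool`; `ends e i` is the end-vertex at
which the half-edge `(e, i)` is attached (loops and multiple edges are
allowed). -/
structure Multigraph (V E : Type) where
  ends : E → Bool → V

namespace Multigraph

variable {V E : Type} [Fintype V] [Fintype E] [DecidableEq V] [DecidableEq E]

/-- The valency of `v` in the subgraph spanned by the edge set `S`: the number
of half-edges of edges of `S` attached at `v` (a loop at `v` contributes
`2`). -/
def valencyOn (G : Multigraph V E) (S : Finset E) (v : V) : ℕ :=
  (univ.filter fun p : E × Bool => p.1 ∈ S ∧ G.ends p.1 p.2 = v).card

/-- The valency of a vertex in `G`. -/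
def valency (G : Multigraph V E) (v : V) : ℕ :=
  G.valencyOn univ v

/-- The set of vertices incident with some edge of `S`. -/
def suppV (G : Multigraph V E) (S : Finset E) : Finset V :=
  univ.filter fun v => ∃ e ∈ S, ∃ i : Bool, G.ends e i = v

/-- `u` and `v` are joined by an edge of `S`. -/
def AdjOn (G : Multigraph V E) (S : Finset E) (u v : V) : Prop :=
  ∃ e ∈ S, ∃ i : Bool, G.ends e i = u ∧ G.ends e (!i) = v

/-- The subgraph spanned by the edge set `S` is connected. -/
def ConnOn (G : Multigraph V E) (S : Finset E) : Prop :=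
  ∀ u ∈ G.suppV S, ∀ v ∈ G.suppV S, Relation.ReflTransGen (G.AdjOn S) u v

/-- `G` is connected (as a graph on the whole vertex set `V`). -/
def Connected (G : Multigraph V E) : Prop :=
  Nonempty V ∧ ∀ u v : V, Relation.ReflTransGen (G.AdjOn univ) u v

/-- The edge set `S` spans an eulerian subgraph of `G`: nonempty, connected,
with all valencies even. -/
def EulerianOn (G : Multigraph V E) (S : Finset E) : Prop :=
  S.Nonempty ∧ G.ConnOn S ∧ ∀ v : V, Even (G.valencyOn S v)

end Multigraph

/-!
Give every edge the sign `1`, and let splitting off two edges at a common vertex produce one edge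
whose sign is the sum of theirs. A decomposition into eulerian subgraphs with an odd number of odd
edges each, all containing a vertex `z`, pulls back along splittings away from `z`. On a single
vertex, a `2r`-regular graph all of whose edges are odd consists of `r` odd loops, and each loop is
one part. It remains to split off vertices, in connected `2r`-regular graphs of odd order, such that
connectedness is kept and all edges are odd again.

A minimum cut has `2k ≤ 2r` edges and one side of even order; all vertices of that side are split
off, one at a time. Throughout, cuts not dividing the other side have at least `2k` edges, and
switching the signature (constantly on the other side) leaves at least `k` odd edges. Initially the
latter is a count that uses that the order of the side is even. Given an edge `e` at the vertex `y`,
the edges that cannot be split off with `e` because of a cut attaining its bound make up, together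
with `e`, at most half of the star of `y`, by uncrossing; the same holds for switchings. As both
halves contain `e`, they do not cover the star. Finally, what the even side leaves behind is a set
of `k` edges, at least `k` of which are odd. Connectedness is kept since, by minimality of the cut,
the graph inside the odd side was connected from the start.
-/

section Counting

variable {α : Type*}

/-- The set of elements of `T` at which the `ZMod 2`-valued function `p` takes the value `1`. -/
def ones (T : Finset α) (p : α → ZMod 2) : Finset α := {x ∈ T | p x = 1}

theorem mem_ones {T : Finset α} {p : α → ZMod 2} {x : α} : x ∈ ones T p ↔ x ∈ T ∧ p x = 1 :=
  mem_filter

theorem ones_subset (T : Finset α) (p : α → ZMod 2) : ones T p ⊆ T := filter_subset _ T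

theorem card_ones_eq_sum_val (T : Finset α) (p : α → ZMod 2) :
    #(ones T p) = ∑ x ∈ T, (p x).val := by
  have val_eq : ∀ a : ZMod 2, (if a = 1 then 1 else 0) = a.val := by decide
  simp only [ones, card_filter, val_eq]

theorem natCast_card_ones (T : Finset α) (p : α → ZMod 2) :
    (#(ones T p) : ZMod 2) = ∑ x ∈ T, p x := by
  simp [card_ones_eq_sum_val]

theorem card_ones_add_card_ones_add_one (T : Finset α) (p : α → ZMod 2) :
    #(ones T p) + #(ones T fun x => p x + 1) = #T := by
  have add_one_eq_one_iff : ∀ a : ZMod 2, a + 1 = 1 ↔ ¬a = 1 := by decide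
  simp only [ones, add_one_eq_one_iff]
  exact card_filter_add_card_filter_not _

variable [DecidableEq α]

theorem mem_sdiff_ones {T : Finset α} {p : α → ZMod 2} {x : α} :
    x ∈ T \ ones T p ↔ x ∈ T ∧ p x = 0 := by
  have ne_one_iff : ∀ a : ZMod 2, a ≠ 1 ↔ a = 0 := by decide
  rw [mem_sdiff, mem_ones, ← ne_one_iff]
  tauto

theorem ones_add (T : Finset α) (p q : α → ZMod 2) :
    ones T (p + q) = symmDiff (ones T p) (ones T q) := by
  ext x
  have add_eq_one : ∀ a b : ZMod 2, a + b = 1 ↔ a = 1 ∧ b ≠ 1 ∨ b = 1 ∧ a ≠ 1 := by decide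
  simp only [mem_symmDiff, mem_ones, Pi.add_apply, add_eq_one]
  tauto

theorem card_symmDiff_add_two_mul_card_inter (s t : Finset α) :
    #(symmDiff s t) + 2 * #(s ∩ t) = #s + #t := by
  have hdisj : Disjoint (symmDiff s t) (s ∩ t) := disjoint_symmDiff_inf s t
  have hunion : symmDiff s t ∪ (s ∩ t) = s ∪ t := symmDiff_sup_inf s t
  rw [← card_union_add_card_inter, ← hunion, card_union_of_disjoint hdisj]
  ring

/-- The function obtained from `p` by adding the value at `g` to the value at `e`. Splitting off
the edges `e` and `g` of a graph acts in this way on functions of the edges. -/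
def merge {M : Type*} [Add M] (e g : α) (p : α → M) : α → M := Function.update p e (p e + p g)

theorem sum_merge {M : Type*} [AddCommMonoid M] {S : Finset α} {e g : α} (he : e ∈ S)
    (hg : g ∉ S) (p : α → M) : ∑ x ∈ S, merge e g p x = ∑ x ∈ insert g S, p x := by
  rw [merge, sum_update_of_mem he, sum_insert hg, ← add_sum_erase _ _ he, sdiff_singleton_eq_erase]
  abel

theorem merge_add {M : Type*} [AddCommMonoid M] (e g : α) (p q : α → M) :
    merge e g (p + q) = merge e g p + merge e g q := by
  simp only [merge, ← Function.update_add, Pi.add_apply]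
  congr 1
  abel

theorem card_ones_merge {S : Finset α} {e g : α} (he : e ∈ S) (hg : g ∉ S) (p : α → ZMod 2) :
    #(ones S (merge e g p)) + 2 * (p e * p g).val = #(ones (insert g S) p) := by
  have val_add : ∀ a b : ZMod 2, (a + b).val + 2 * (a * b).val = a.val + b.val := by decide
  have hoff : ∑ x ∈ S \ {e}, (merge e g p x).val = ∑ x ∈ S \ {e}, (p x).val :=
    sum_congr rfl fun x hx => by
      rw [merge, Function.update_of_ne (by simpa using (mem_sdiff.1 hx).2)]
  rw [card_ones_eq_sum_val, card_ones_eq_sum_val, sum_insert hg,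
    sum_eq_add_sum_sdiff_singleton_of_mem he, sum_eq_add_sum_sdiff_singleton_of_mem he, hoff,
    merge, Function.update_self]
  have := val_add (p e) (p g)
  omega

theorem le_card_ones_merge {S : Finset α} {e g : α} {n : ℕ} (he : e ∈ S) (hg : g ∉ S)
    {p : α → ZMod 2} (hle : n ≤ #(ones (insert g S) p))
    (hparity : #(ones (insert g S) p) ≡ n [MOD 2])
    (htight : #(ones (insert g S) p) = n → ¬(p e = 1 ∧ p g = 1)) :
    n ≤ #(ones S (merge e g p)) := by
  have hcard := card_ones_merge he hg p
  have val_mul : ∀ a b : ZMod 2, (a * b).val = if a = 1 ∧ b = 1 then 1 else 0 := by decide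
  rw [val_mul] at hcard
  unfold Nat.ModEq at hparity
  split_ifs at hcard with hone
  · have hne : #(ones (insert g S) p) ≠ n := fun heq => htight heq hone
    omega
  · omega

end Counting

section ConstOn

variable {α β γ δ : Type*}

/-- `f` is constant on `s`. A `ZMod 2`-valued function that is not constant on `s` describes a
cut separating two elements of `s`. -/
def ConstOn (s : Finset α) (f : α → β) : Prop := ∀ u ∈ s, ∀ v ∈ s, f u = f v

theorem ConstOn.comp {s : Finset α} {f : α → β} (hf : ConstOn s f) (op : β → γ) :
    ConstOn s fun v => op (f v) := fun u hu v hv => congrArg op (hf u hu v hv)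

theorem ConstOn.comp₂ {s : Finset α} {f : α → β} {g : α → γ} (hf : ConstOn s f)
    (hg : ConstOn s g) (op : β → γ → δ) : ConstOn s fun v => op (f v) (g v) :=
  fun u hu v hv => congrArg₂ op (hf u hu v hv) (hg u hu v hv)

theorem ConstOn.mono {s t : Finset α} {f : α → β} (hf : ConstOn t f) (hst : s ⊆ t) :
    ConstOn s f := fun u hu v hv => hf u (hst hu) v (hst hv)

theorem constOn_add_const_iff [Add β] [IsRightCancelAdd β] {s : Finset α} {f : α → β} {b : β} :
    ConstOn s (fun v => f v + b) ↔ ConstOn s f := by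
  simp only [ConstOn, add_left_inj]

theorem constOn_single_of_notMem [DecidableEq α] [Zero β] {s : Finset α} {y : α} (hy : y ∉ s)
    (b : β) : ConstOn s (Pi.single y b : α → β) := fun u hu v hv => by
  rw [Pi.single_eq_of_ne (ne_of_mem_of_not_mem hu hy),
    Pi.single_eq_of_ne (ne_of_mem_of_not_mem hv hy)]

theorem not_constOn_iff {s : Finset α} {χ : α → ZMod 2} :
    ¬ConstOn s χ ↔ (∃ u ∈ s, χ u = 0) ∧ ∃ v ∈ s, χ v = 1 := by
  have zero_or_one : ∀ a : ZMod 2, a = 0 ∨ a = 1 := by decide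
  constructor
  · intro h
    simp only [ConstOn, not_forall] at h
    obtain ⟨u, hu, v, hv, hne⟩ := h
    rcases zero_or_one (χ u) with hu' | hu' <;> rcases zero_or_one (χ v) with hv' | hv'
    · exact absurd (hu'.trans hv'.symm) hne
    · exact ⟨⟨u, hu, hu'⟩, v, hv, hv'⟩
    · exact ⟨⟨v, hv, hv'⟩, u, hu, hu'⟩
    · exact absurd (hu'.trans hv'.symm) hne
  · rintro ⟨⟨u, hu, hu'⟩, v, hv, hv'⟩ h
    exact zero_ne_one (hu'.symm.trans ((h u hu v hv).trans hv'))

theorem constOn_of_constOn_add [Add β] [IsRightCancelAdd β] {s : Finset α} {f g : α → β}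
    (hfg : ConstOn s (f + g)) (hg : ConstOn s g) : ConstOn s f := fun u hu v hv =>
  add_right_cancel (b := g u) ((hfg u hu v hv).trans (by rw [Pi.add_apply, hg v hv u hu]))

theorem not_constOn_mul {s : Finset α} {χ ψ : α → ZMod 2} {u : α} (hu : u ∈ s) (hχu : χ u = 1)
    (hψu : ψ u = 1) (hχ : ¬ConstOn s χ) : ¬ConstOn s (χ * ψ) := by
  obtain ⟨⟨v, hv, hχv⟩, -⟩ := not_constOn_iff.1 hχ
  exact not_constOn_iff.2 ⟨⟨v, hv, by simp [hχv]⟩, u, hu, by simp [hχu, hψu]⟩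

theorem constOn_of_constOn_join {s : Finset α} {χ ψ : α → ZMod 2} {u : α} (hu : u ∈ s)
    (hχu : χ u = 1) (hψu : ψ u = 1) (hjoin : ConstOn s (χ + ψ + χ * ψ))
    (hdiff : ConstOn s (χ * (1 + ψ))) : ConstOn s ψ := by
  have eq_one : ∀ a b : ZMod 2, a + b + a * b = 1 → a * (1 + b) = 0 → b = 1 := by decide
  have hψ : ∀ v ∈ s, ψ v = 1 := by
    intro v hv
    refine eq_one (χ v) (ψ v) ((hjoin v hv u hu).trans ?_) ((hdiff v hv u hu).trans ?_) <;>
      simp only [Pi.add_apply, Pi.mul_apply, Pi.one_apply, hχu, hψu] <;> decide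
  exact fun v hv w hw => (hψ v hv).trans (hψ w hw).symm

end ConstOn

namespace Multigraph

variable {V E : Type} (G : Multigraph V E)

section Coboundary

variable {M : Type*} [AddCommMonoid M]

/-- The sum of `φ` over the two ends of `e`. For `M = ZMod 2` this is the coboundary of the
`0`-cochain `φ`: it is `1` iff `e` crosses the cut with sides `φ = 0` and `φ = 1`. -/
def coboundary (φ : V → M) (e : E) : M := φ (G.ends e false) + φ (G.ends e true)

theorem coboundary_eq (φ : V → M) (e : E) (i : Bool) :
    G.coboundary φ e = φ (G.ends e i) + φ (G.ends e (!i)) := by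
  cases i
  · rfl
  · exact add_comm _ _

theorem coboundary_add (φ ψ : V → M) :
    G.coboundary (φ + ψ) = G.coboundary φ + G.coboundary ψ :=
  funext fun _ => add_add_add_comm _ _ _ _

/-- The sum of `φ` over the ends of all edges in `S`. -/
def endSum (S : Finset E) (φ : V → M) : M := ∑ e ∈ S, G.coboundary φ e

end Coboundary

theorem coboundary_add_const (χ : V → ZMod 2) (a : ZMod 2) :
    G.coboundary (fun v => χ v + a) = G.coboundary χ := by
  ext e
  rw [coboundary, add_add_add_comm, CharTwo.add_self_eq_zero, add_zero, coboundary]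

variable {G} in
theorem coboundary_eq_zero_of_loop {e : E} {y : V} (hloop : ∀ i, G.ends e i = y)
    (χ : V → ZMod 2) : G.coboundary χ e = 0 := by
  rw [coboundary, hloop, hloop, CharTwo.add_self_eq_zero]

variable [Fintype E] [DecidableEq V] [DecidableEq E]

variable {G} in
theorem endSum_eq_sum_valencyOn {M : Type*} [AddCommMonoid M] {S : Finset E} {X : Finset V}
    (hends : ∀ e ∈ S, ∀ i, G.ends e i ∈ X) (φ : V → M) :
    G.endSum S φ = ∑ v ∈ X, G.valencyOn S v • φ v := by
  have hmaps : ∀ p ∈ S ×ˢ (univ : Finset Bool), G.ends p.1 p.2 ∈ X := fun p hp =>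
    hends p.1 (mem_product.1 hp).1 p.2
  calc G.endSum S φ = ∑ p ∈ S ×ˢ (univ : Finset Bool), φ (G.ends p.1 p.2) := by
        simp only [endSum, coboundary, sum_product, Fintype.sum_bool, add_comm]
    _ = ∑ v ∈ X, ∑ p ∈ S ×ˢ (univ : Finset Bool) with G.ends p.1 p.2 = v, φ (G.ends p.1 p.2) :=
        (sum_fiberwise_of_maps_to hmaps _).symm
    _ = ∑ v ∈ X, G.valencyOn S v • φ v := sum_congr rfl fun v _ => by
        rw [sum_congr rfl fun p hp => by rw [(mem_filter.1 hp).2], sum_const, valencyOn]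
        congr 2
        ext p
        simp

theorem valencyOn_eq_endSum (S : Finset E) (v : V) :
    G.valencyOn S v = G.endSum S (Pi.single v 1) := by
  have hends : ∀ e ∈ S, ∀ i, G.ends e i ∈ insert v (S.biUnion fun e => univ.image (G.ends e)) :=
    fun e he i => mem_insert_of_mem (mem_biUnion.2 ⟨e, he, mem_image_of_mem _ (mem_univ i)⟩)
  simp [endSum_eq_sum_valencyOn hends, Pi.single_apply]

end Multigraph

/-- A multigraph with a `ZMod 2`-valued signature, restricted to a finite set of its edges.
An edge `e` with `sign e = 1` is called odd. After splitting off, an edge stands for a trail of the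
original graph and its sign is the parity of the length of that trail. -/
structure SignedGraph_s17 (V E : Type) extends Multigraph V E where
  sign : E → ZMod 2
  edges : Finset E

namespace SignedGraph_s17

variable {V E : Type}

section Cuts

variable (H : SignedGraph_s17 V E)

/-- All edges have their ends in `X`. -/
def EndsIn (X : Finset V) : Prop := ∀ e ∈ H.edges, ∀ i, H.ends e i ∈ X

/-- The edges crossing the cut with sides `χ = 0` and `χ = 1`. -/
def cut (χ : V → ZMod 2) : Finset E := ones H.edges (H.coboundary χ)

/-- The edges that are odd after switching the signature at the vertices with `χ = 1`. -/
def oddEdges (χ : V → ZMod 2) : Finset E := ones H.edges (H.sign + H.coboundary χ)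

/-- The edges joining `y` to another vertex. -/
def star [DecidableEq V] (y : V) : Finset E := H.cut (Pi.single y 1)

variable {H}

theorem mem_cut {χ : V → ZMod 2} {e : E} :
    e ∈ H.cut χ ↔ e ∈ H.edges ∧ H.coboundary χ e = 1 := mem_ones

theorem cut_add_const (χ : V → ZMod 2) (a : ZMod 2) :
    H.cut (fun v => χ v + a) = H.cut χ := by
  rw [cut, Multigraph.coboundary_add_const, cut]

theorem oddEdges_add_const (χ : V → ZMod 2) (a : ZMod 2) :
    H.oddEdges (fun v => χ v + a) = H.oddEdges χ := by
  rw [oddEdges, Multigraph.coboundary_add_const, oddEdges]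

theorem cut_eq_empty_of_constOn {X : Finset V} (hends : H.EndsIn X) {χ : V → ZMod 2}
    (hχ : ConstOn X χ) : H.cut χ = ∅ :=
  filter_eq_empty_iff.2 fun e he => by
    rw [Multigraph.coboundary, hχ _ (hends e he false) _ (hends e he true),
      CharTwo.add_self_eq_zero]
    exact zero_ne_one

theorem card_cut_mul_add_card_cut_join_le (χ ψ : V → ZMod 2) :
    #(H.cut (χ * ψ)) + #(H.cut (χ + ψ + χ * ψ)) ≤ #(H.cut χ) + #(H.cut ψ) := by
  have pointwise : ∀ a b c d : ZMod 2, (a * c + b * d).val + (a + c + a * c + (b + d + b * d)).val ≤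
      (a + b).val + (c + d).val := by decide
  simp only [cut, card_ones_eq_sum_val, ← sum_add_distrib]
  exact sum_le_sum fun e _ => pointwise _ _ _ _

/-- An edge joining the intersection of the two sides to the complement of their union crosses
`χ` and `ψ` but neither of the two differences. -/
theorem card_cut_sdiff_add_card_cut_sdiff_lt {χ ψ : V → ZMod 2} {e : E} (he : e ∈ H.edges)
    {i : Bool} (hχ₀ : χ (H.ends e i) = 0) (hψ₀ : ψ (H.ends e i) = 0)
    (hχ₁ : χ (H.ends e (!i)) = 1) (hψ₁ : ψ (H.ends e (!i)) = 1) :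
    #(H.cut (χ * (1 + ψ))) + #(H.cut (ψ * (1 + χ))) < #(H.cut χ) + #(H.cut ψ) := by
  have pointwise : ∀ a b c d : ZMod 2, (a * (1 + c) + b * (1 + d)).val +
      (c * (1 + a) + d * (1 + b)).val ≤ (a + b).val + (c + d).val := by decide
  simp only [cut, card_ones_eq_sum_val, ← sum_add_distrib]
  refine sum_lt_sum (fun e _ => pointwise _ _ _ _) ⟨e, he, ?_⟩
  simp only [Multigraph.coboundary_eq _ _ e i, Pi.mul_apply, Pi.add_apply, Pi.one_apply, hχ₀, hψ₀,
    hχ₁, hψ₁]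
  decide

variable [DecidableEq E]

theorem cut_add (χ ψ : V → ZMod 2) : H.cut (χ + ψ) = symmDiff (H.cut χ) (H.cut ψ) := by
  rw [cut, Multigraph.coboundary_add, ones_add]
  rfl

theorem oddEdges_add (χ ψ : V → ZMod 2) :
    H.oddEdges (χ + ψ) = symmDiff (H.oddEdges χ) (H.cut ψ) := by
  rw [oddEdges, Multigraph.coboundary_add, ← add_assoc, ones_add]
  rfl

theorem symmDiff_oddEdges (χ ψ : V → ZMod 2) :
    symmDiff (H.oddEdges χ) (H.oddEdges ψ) = H.cut (χ + ψ) := by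
  have hψ : H.oddEdges ψ = symmDiff (H.oddEdges χ) (H.cut (χ + ψ)) := by
    have hχ : χ + χ = 0 := funext fun v => CharTwo.add_self_eq_zero (χ v)
    rw [← oddEdges_add, ← add_assoc, hχ, zero_add]
  rw [hψ, symmDiff_symmDiff_cancel_left]

end Cuts

section Star

variable [DecidableEq V] {H : SignedGraph_s17 V E} {X : Finset V} {y : V} {e : E}

theorem mem_star : e ∈ H.star y ↔ e ∈ H.edges ∧ ∃ i, H.ends e i = y ∧ H.ends e (!i) ≠ y := by
  refine mem_cut.trans (and_congr_right fun _ => ?_)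
  by_cases hfalse : H.ends e false = y <;> by_cases htrue : H.ends e true = y <;>
    simp [Multigraph.coboundary, hfalse, htrue, CharTwo.add_self_eq_zero]

theorem notMem_star_of_loop (hloop : ∀ i, H.ends e i = y) : e ∉ H.star y := fun h =>
  have ⟨_, i, _, hne⟩ := mem_star.1 h
  hne (hloop (!i))

theorem EndsIn.of_star_eq_empty (hends : H.EndsIn (insert y X)) (hstar : H.star y = ∅)
    (hloop : ∀ e ∈ H.edges, ¬∀ i, H.ends e i = y) : H.EndsIn X := by
  intro e he i
  refine (mem_insert.1 (hends e he i)).resolve_left fun hi => ?_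
  by_cases hi' : H.ends e (!i) = y
  · exact hloop e he fun j => by cases i <;> cases j <;> assumption
  · exact eq_empty_iff_forall_notMem.1 hstar e (mem_star.2 ⟨he, i, hi, hi'⟩)

theorem cut_eq_empty_or_eq_star (hends : H.EndsIn (insert y X)) {χ : V → ZMod 2}
    (hχ : ConstOn X χ) : H.cut χ = ∅ ∨ H.cut χ = H.star y := by
  by_cases hconst : ∀ x ∈ X, χ x = χ y
  · refine .inl (cut_eq_empty_of_constOn hends fun u hu v hv => ?_)
    have eq_at_y : ∀ x ∈ insert y X, χ x = χ y := forall_mem_insert _ _ _ |>.2 ⟨rfl, hconst⟩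
    rw [eq_at_y u hu, eq_at_y v hv]
  · push Not at hconst
    obtain ⟨x, hx, hxy⟩ := hconst
    have eq_add_single : ∀ v ∈ insert y X, χ v = χ x + (Pi.single y 1 : V → ZMod 2) v := by
      have eq_add_one : ∀ a b : ZMod 2, b ≠ a → a = b + 1 := by decide
      intro v hv
      by_cases hvy : v = y
      · rw [hvy, Pi.single_eq_same, eq_add_one _ _ hxy]
      · rw [Pi.single_eq_of_ne hvy, add_zero, hχ v (mem_of_mem_insert_of_ne hv hvy) x hx]
    refine .inr (filter_congr fun e he => ?_)
    rw [Multigraph.coboundary, eq_add_single _ (hends e he false),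
      eq_add_single _ (hends e he true), add_add_add_comm, CharTwo.add_self_eq_zero, zero_add,
      Multigraph.coboundary]

theorem star_inter_cut_join [DecidableEq E] {χ ψ : V → ZMod 2} (hχ : χ y = 0) (hψ : ψ y = 0) :
    H.star y ∩ H.cut (χ + ψ + χ * ψ) = H.star y ∩ (H.cut χ ∪ H.cut ψ) := by
  ext e
  simp only [mem_inter, mem_union]
  refine and_congr_right fun he => ?_
  obtain ⟨hedge, i, hi, -⟩ := mem_star.1 he
  have join_eq_one : ∀ a b : ZMod 2, a + b + a * b = 1 ↔ a = 1 ∨ b = 1 := by decide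
  simp [mem_cut, hedge, Multigraph.coboundary_eq _ _ e i, hi, hχ, hψ, join_eq_one]

end Star

section SplittingOff

variable [DecidableEq E]

/-- Splitting off: the edges `e` and `g`, joined at `ends e i = ends g j`, are replaced by a single
edge, called `e` again, between their other ends. -/
def splitOff (H : SignedGraph_s17 V E) (e g : E) (i j : Bool) : SignedGraph_s17 V E where
  ends := Function.update H.ends e (Function.update (H.ends e) i (H.ends g (!j)))
  sign := merge e g H.sign
  edges := H.edges.erase g

variable {H : SignedGraph_s17 V E} {e g : E} {i j : Bool}

theorem splitOff_ends_of_ne {x : E} (hx : x ≠ e) : (H.splitOff e g i j).ends x = H.ends x :=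
  Function.update_of_ne hx _ _

theorem splitOff_ends_self : (H.splitOff e g i j).ends e i = H.ends g (!j) := by
  simp [splitOff]

theorem splitOff_ends_not : (H.splitOff e g i j).ends e (!i) = H.ends e (!i) := by
  simp [splitOff]

theorem splitOff_ends_mem {X : Finset V} (he : ∀ l, H.ends e l ∈ X) (hg : ∀ l, H.ends g l ∈ X)
    (l : Bool) : (H.splitOff e g i j).ends e l ∈ X := by
  rcases Bool.eq_or_eq_not l i with rfl | rfl
  · rw [splitOff_ends_self]
    exact hg _
  · rw [splitOff_ends_not]
    exact he _

theorem coboundary_splitOff {M : Type*} [AddCommMonoid M] (hjoin : H.ends e i = H.ends g j)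
    {φ : V → M} (hφ : φ (H.ends e i) + φ (H.ends e i) = 0) :
    (H.splitOff e g i j).coboundary φ = merge e g (H.coboundary φ) := by
  ext x
  rcases eq_or_ne x e with rfl | hx
  · rw [merge, Function.update_self, Multigraph.coboundary_eq _ _ _ i, splitOff_ends_self,
      splitOff_ends_not, Multigraph.coboundary_eq _ _ x i, Multigraph.coboundary_eq _ _ g j,
      ← hjoin, add_add_add_comm, hφ, zero_add, add_comm]
  · rw [merge, Function.update_of_ne hx, Multigraph.coboundary, splitOff_ends_of_ne hx]
    rfl

theorem coboundary_splitOff_zmod (hjoin : H.ends e i = H.ends g j) (χ : V → ZMod 2) :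
    (H.splitOff e g i j).coboundary χ = merge e g (H.coboundary χ) :=
  coboundary_splitOff hjoin (CharTwo.add_self_eq_zero _)

theorem endSum_splitOff {M : Type*} [AddCommMonoid M] (he : e ∈ H.edges) (hg : g ∈ H.edges)
    (hne : e ≠ g) (hjoin : H.ends e i = H.ends g j) {φ : V → M}
    (hφ : φ (H.ends e i) + φ (H.ends e i) = 0) :
    (H.splitOff e g i j).endSum (H.splitOff e g i j).edges φ = H.endSum H.edges φ := by
  rw [Multigraph.endSum, coboundary_splitOff hjoin hφ, Multigraph.endSum, splitOff,
    sum_merge (mem_erase.2 ⟨hne, he⟩) (notMem_erase _ _), insert_erase hg]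

theorem EndsIn.splitOff {X : Finset V} (hends : H.EndsIn X) (he : e ∈ H.edges)
    (hg : g ∈ H.edges) : (H.splitOff e g i j).EndsIn X := by
  intro x hx
  rcases eq_or_ne x e with rfl | hxe
  · exact splitOff_ends_mem (hends x he) (hends g hg)
  · rw [splitOff_ends_of_ne hxe]
    exact hends x (mem_of_mem_erase hx)

/-- `H'` arises from `H` by splitting off two edges that meet outside `B`. -/
def SplitStep (B : Finset V) (H H' : SignedGraph_s17 V E) : Prop :=
  ∃ e ∈ H.edges, ∃ g ∈ H.edges, e ≠ g ∧
    ∃ i j, H.ends e i = H.ends g j ∧ H.ends e i ∉ B ∧ H' = H.splitOff e g i j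

/-- `H'` arises from `H` by repeatedly splitting off pairs of edges that meet outside `B`. -/
def Splits (B : Finset V) : SignedGraph_s17 V E → SignedGraph_s17 V E → Prop :=
  Relation.ReflTransGen (SplitStep B)

variable {B : Finset V} {K : SignedGraph_s17 V E}

theorem SplitStep.card_edges_lt (hstep : SplitStep B H K) :
    #K.edges < #H.edges := by
  obtain ⟨e, -, g, hg, -, i, j, -, -, rfl⟩ := hstep
  exact card_erase_lt_of_mem hg

theorem Splits.edges_subset (hsplits : Splits B H K) : K.edges ⊆ H.edges := by
  induction hsplits with
  | refl => exact Subset.rfl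
  | tail _ hstep ih =>
    obtain ⟨e, -, g, -, -, i, j, -, -, rfl⟩ := hstep
    exact (erase_subset _ _).trans ih

theorem Splits.ends_eq_of_notMem (hsplits : Splits B H K) {x : E} (hx : x ∉ H.edges) :
    K.ends x = H.ends x := by
  induction hsplits with
  | refl => rfl
  | tail hsplits hstep ih =>
    obtain ⟨e, he, g, -, -, i, j, -, -, rfl⟩ := hstep
    rw [splitOff_ends_of_ne (ne_of_mem_of_not_mem (Splits.edges_subset hsplits he) hx).symm, ih]

theorem Splits.sign_eq_of_notMem (hsplits : Splits B H K) {x : E} (hx : x ∉ H.edges) :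
    K.sign x = H.sign x := by
  induction hsplits with
  | refl => rfl
  | tail hsplits hstep ih =>
    obtain ⟨e, he, g, -, -, i, j, -, -, rfl⟩ := hstep
    rw [← ih]
    exact Function.update_of_ne (ne_of_mem_of_not_mem (Splits.edges_subset hsplits he) hx).symm _ _

theorem Splits.valencyOn_eq [Fintype E] [DecidableEq V] (hsplits : Splits B H K) {v : V}
    (hv : v ∈ B) : K.valencyOn K.edges v = H.valencyOn H.edges v := by
  induction hsplits with
  | refl => rfl
  | tail _ hstep ih =>
    obtain ⟨e, he, g, hg, hne, i, j, hjoin, hB, rfl⟩ := hstep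
    have hzero := Pi.single_eq_of_ne (M := fun _ : V => ℕ) (ne_of_mem_of_not_mem hv hB).symm 1
    rw [Multigraph.valencyOn_eq_endSum, endSum_splitOff he hg hne hjoin (by rw [hzero, add_zero]),
      ← Multigraph.valencyOn_eq_endSum, ih]

/-- The graph `H` with edge set `S`. -/
def withEdges (H : SignedGraph_s17 V E) (S : Finset E) : SignedGraph_s17 V E := { H with edges := S }

theorem Splits.union {R : Finset E} (hsplits : Splits B H K) (hdisj : Disjoint R H.edges) :
    Splits B (H.withEdges (R ∪ H.edges)) (K.withEdges (R ∪ K.edges)) := by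
  induction hsplits with
  | refl => exact .refl
  | tail hsplits hstep ih =>
    obtain ⟨e, he, g, hg, hne, i, j, hjoin, hB, rfl⟩ := hstep
    refine ih.tail ⟨e, mem_union_right _ he, g, mem_union_right _ hg, hne, i, j, hjoin, hB, ?_⟩
    have hgR : g ∉ R := disjoint_right.1 hdisj (Splits.edges_subset hsplits hg)
    simp only [withEdges, splitOff, erase_union_distrib, erase_eq_of_notMem hgR]

end SplittingOff

section OddDecomposition

variable {H : SignedGraph_s17 V E} {e g : E} {i j : Bool} {z : V} {S : Finset E}

/-- The edge set `S` spans an eulerian subgraph with an odd number of odd edges containing the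
vertex `z`. Evenness of the valencies and connectedness are both expressed by `0`-cochains. -/
structure IsRootedOddEulerian (H : SignedGraph_s17 V E) (z : V) (S : Finset E) : Prop where
  even : ∀ χ : V → ZMod 2, ∑ e ∈ S, H.coboundary χ e = 0
  odd : ∑ e ∈ S, H.sign e = 1
  connected : ∀ χ : V → ZMod 2, χ z = 0 → (∀ e ∈ S, H.coboundary χ e = 0) →
    ∀ e ∈ S, ∀ i, χ (H.ends e i) = 0

theorem isRootedOddEulerian_singleton (hloop : ∀ l, H.ends e l = z) (hsign : H.sign e = 1) :
    H.IsRootedOddEulerian z {e} where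
  even χ := by rw [sum_singleton, Multigraph.coboundary_eq_zero_of_loop hloop]
  odd := by rw [sum_singleton, hsign]
  connected χ hz _ x hx l := by rw [mem_singleton.1 hx, hloop, hz]

/-- The edges of `H` can be coloured with `r` colours such that each colour class spans an eulerian
subgraph with an odd number of odd edges containing `z`. -/
def HasOddDecomposition (H : SignedGraph_s17 V E) (r : ℕ) (z : V) : Prop :=
  ∃ c : E → ℕ, (∀ e ∈ H.edges, c e < r) ∧
    ∀ t < r, H.IsRootedOddEulerian z {e ∈ H.edges | c e = t}

theorem hasOddDecomposition_of_loops (hloop : H.EndsIn {z}) (hsign : ∀ e ∈ H.edges, H.sign e = 1) :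
    H.HasOddDecomposition #H.edges z := by
  classical
  let index := H.edges.equivFin
  refine ⟨fun e => if he : e ∈ H.edges then index ⟨e, he⟩ else 0, fun e he => ?_, fun t ht => ?_⟩
  · simp [he]
  · obtain ⟨⟨e, he⟩, het⟩ := index.surjective ⟨t, ht⟩
    have hpiece :
        {x ∈ H.edges | (if hx : x ∈ H.edges then (index ⟨x, hx⟩ : ℕ) else 0) = t} = {e} := by
      ext x
      rw [mem_filter, mem_singleton]
      refine ⟨fun ⟨hx, hxt⟩ => ?_, ?_⟩
      · rw [dif_pos hx] at hxt
        exact congrArg Subtype.val (index.injective ((Fin.ext hxt).trans het.symm))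
      · rintro rfl
        exact ⟨he, by rw [dif_pos he, het]⟩
    rw [hpiece]
    exact isRootedOddEulerian_singleton (fun l => mem_singleton.1 (hloop e he l)) (hsign e he)

variable [DecidableEq E]

theorem IsRootedOddEulerian.of_splitOff_of_notMem (he : e ∉ S)
    (hjoin : H.ends e i = H.ends g j)
    (hS : (H.splitOff e g i j).IsRootedOddEulerian z S) : H.IsRootedOddEulerian z S := by
  have hne : ∀ x ∈ S, x ≠ e := fun x hx => ne_of_mem_of_not_mem hx he
  have hcoboundary : ∀ χ : V → ZMod 2, ∀ x ∈ S,
      (H.splitOff e g i j).coboundary χ x = H.coboundary χ x := fun χ x hx => by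
    rw [coboundary_splitOff_zmod hjoin, merge, Function.update_of_ne (hne x hx)]
  refine ⟨fun χ => ?_, ?_, fun χ hz hχ x hx l => ?_⟩
  · rw [← hS.even χ, sum_congr rfl (hcoboundary χ)]
  · rw [← hS.odd]
    exact sum_congr rfl fun x hx => (Function.update_of_ne (hne x hx) _ _).symm
  · rw [← splitOff_ends_of_ne (hne x hx)]
    exact hS.connected χ hz (fun y hy => (hcoboundary χ y hy).trans (hχ y hy)) x hx l

theorem IsRootedOddEulerian.of_splitOff_of_mem (he : e ∈ S) (hg : g ∉ S)
    (hjoin : H.ends e i = H.ends g j)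
    (hS : (H.splitOff e g i j).IsRootedOddEulerian z S) :
    H.IsRootedOddEulerian z (insert g S) := by
  refine ⟨fun χ => ?_, ?_, fun χ hz hχ => ?_⟩
  · rw [← hS.even χ, coboundary_splitOff_zmod hjoin, sum_merge he hg]
  · rw [← hS.odd, splitOff, sum_merge he hg]
  have hχe : H.coboundary χ e = 0 := hχ e (mem_insert_of_mem he)
  have hχg : H.coboundary χ g = 0 := hχ g (mem_insert_self g S)
  have hsplit : ∀ x ∈ S, ∀ l, χ ((H.splitOff e g i j).ends x l) = 0 := by
    refine hS.connected χ hz fun x hx => ?_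
    rw [coboundary_splitOff_zmod hjoin]
    rcases eq_or_ne x e with rfl | hxe
    · rw [merge, Function.update_self, hχe, hχg, add_zero]
    · rw [merge, Function.update_of_ne hxe, hχ x (mem_insert_of_mem hx)]
  have hfar_g : χ (H.ends g (!j)) = 0 := splitOff_ends_self (e := e) (i := i) ▸ hsplit e he i
  have hfar_e : χ (H.ends e (!i)) = 0 := splitOff_ends_not (g := g) (j := j) ▸ hsplit e he (!i)
  have hnear_g : χ (H.ends g j) = 0 := by
    rwa [Multigraph.coboundary_eq _ _ _ j, hfar_g, add_zero] at hχg
  refine forall_mem_insert _ _ _ |>.2 ⟨fun l => ?_, fun x hx l => ?_⟩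
  · rcases Bool.eq_or_eq_not l j with rfl | rfl <;> assumption
  rcases eq_or_ne x e with rfl | hxe
  · rcases Bool.eq_or_eq_not l i with rfl | rfl
    · rwa [hjoin]
    · exact hfar_e
  · exact splitOff_ends_of_ne (H := H) (g := g) (i := i) (j := j) hxe ▸ hsplit x hx l

theorem HasOddDecomposition.of_splitOff {r : ℕ} (he : e ∈ H.edges) (hg : g ∈ H.edges)
    (hne : e ≠ g) (hjoin : H.ends e i = H.ends g j)
    (h : (H.splitOff e g i j).HasOddDecomposition r z) : H.HasOddDecomposition r z := by
  obtain ⟨c, hc, hpiece⟩ := h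
  have he' : e ∈ H.edges.erase g := mem_erase.2 ⟨hne, he⟩
  have hold : ∀ x ∈ H.edges.erase g, Function.update c g (c e) x = c x := fun x hx =>
    Function.update_of_ne (ne_of_mem_erase hx) _ _
  refine ⟨Function.update c g (c e), fun x hx => ?_, fun t ht => ?_⟩
  · rcases eq_or_ne x g with rfl | hxg
    · rw [Function.update_self]
      exact hc e he'
    · rw [Function.update_of_ne hxg]
      exact hc x (mem_erase.2 ⟨hxg, hx⟩)
  · have hS := hpiece t ht
    rw [← insert_erase hg, filter_insert, Function.update_self,
      filter_congr fun x hx => by rw [hold x hx]]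
    split_ifs with hct
    · exact hS.of_splitOff_of_mem (mem_filter.2 ⟨he', hct⟩) (by simp) hjoin
    · exact hS.of_splitOff_of_notMem (by simp [hct]) hjoin

theorem Splits.hasOddDecomposition {B : Finset V} {K : SignedGraph_s17 V E} {r : ℕ}
    (hsplits : Splits B H K) (hK : K.HasOddDecomposition r z) : H.HasOddDecomposition r z := by
  induction hsplits using Relation.ReflTransGen.head_induction_on with
  | refl => exact hK
  | head hstep _ ih =>
    obtain ⟨e, he, g, hg, hne, i, j, hjoin, -, rfl⟩ := hstep
    exact ih.of_splitOff he hg hne hjoin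

end OddDecomposition

section SplittingInvariant

variable {H : SignedGraph_s17 V E} {k : ℕ} {B X : Finset V} {y : V} {χ : V → ZMod 2} {e g : E}

/-- The induction hypothesis for splitting off all vertices of `X` outside `B`. The vertices of `B`
are never separated from one another, so they act as one vertex `B*` of valency `2 * k`. -/
structure SplittingInvariant (H : SignedGraph_s17 V E) (k : ℕ) (B X : Finset V) : Prop where
  sum_coboundary : ∀ χ : V → ZMod 2, ConstOn B χ → ∑ e ∈ H.edges, H.coboundary χ e = 0
  le_card_cut : ∀ χ : V → ZMod 2, ConstOn B χ → ¬ConstOn X χ → 2 * k ≤ #(H.cut χ)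
  sum_sign : ∑ e ∈ H.edges, H.sign e = k
  le_card_oddEdges : ∀ χ : V → ZMod 2, ConstOn B χ → k ≤ #(H.oddEdges χ)

/-- A cut attaining the bound `SplittingInvariant.le_card_cut`. -/
structure IsTightCut (H : SignedGraph_s17 V E) (k : ℕ) (B X : Finset V) (χ : V → ZMod 2) : Prop where
  constOn : ConstOn B χ
  not_constOn : ¬ConstOn X χ
  card_cut : #(H.cut χ) = 2 * k

/-- A switching attaining the bound `SplittingInvariant.le_card_oddEdges`. -/
structure IsTightSwitching (H : SignedGraph_s17 V E) (k : ℕ) (B : Finset V) (χ : V → ZMod 2) :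
    Prop where
  constOn : ConstOn B χ
  card_oddEdges : #(H.oddEdges χ) = k

/-- No tight cut and no tight switching forbids splitting off `e` and `g`. -/
structure IsAdmissible (H : SignedGraph_s17 V E) (k : ℕ) (B X : Finset V) (e g : E) : Prop where
  cut : ∀ χ, H.IsTightCut k B X χ → ¬(e ∈ H.cut χ ∧ g ∈ H.cut χ)
  switching : ∀ χ, H.IsTightSwitching k B χ → ¬(e ∈ H.oddEdges χ ∧ g ∈ H.oddEdges χ)

namespace SplittingInvariant

theorem mono {Y : Finset V} (h : H.SplittingInvariant k B X) (hYX : Y ⊆ X) :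
    H.SplittingInvariant k B Y where
  __ := h
  le_card_cut χ hB hY := h.le_card_cut χ hB fun hX => hY (hX.mono hYX)

theorem even_card_cut (h : H.SplittingInvariant k B X) (hχ : ConstOn B χ) : Even #(H.cut χ) := by
  rw [← ZMod.natCast_eq_zero_iff_even, cut, natCast_card_ones, h.sum_coboundary χ hχ]

theorem card_oddEdges_modEq (h : H.SplittingInvariant k B X) (hχ : ConstOn B χ) :
    #(H.oddEdges χ) ≡ k [MOD 2] := by
  rw [← ZMod.natCast_eq_natCast_iff, oddEdges, natCast_card_ones]
  simp only [Pi.add_apply, sum_add_distrib, h.sum_sign, h.sum_coboundary χ hχ, add_zero]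

theorem two_le_card_star [DecidableEq V] (h : H.SplittingInvariant k B X) (hy : y ∉ B)
    (he : e ∈ H.star y) : 2 ≤ #(H.star y) := by
  have heven : Even #(H.star y) := h.even_card_cut (constOn_single_of_notMem hy 1)
  have hpos : 0 < #(H.star y) := card_pos.2 ⟨e, he⟩
  exact Nat.le_of_dvd hpos heven.two_dvd

theorem splitOff [DecidableEq E] {i j : Bool} (h : H.SplittingInvariant k B X)
    (he : e ∈ H.edges) (hg : g ∈ H.edges) (hne : e ≠ g) (hjoin : H.ends e i = H.ends g j)
    (hadm : H.IsAdmissible k B X e g) : (H.splitOff e g i j).SplittingInvariant k B X := by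
  have he' : e ∈ H.edges.erase g := mem_erase.2 ⟨hne, he⟩
  have hg' : g ∉ H.edges.erase g := notMem_erase g _
  refine ⟨fun χ hB => ?_, fun χ hB hX => ?_, ?_, fun χ hB => ?_⟩
  · rw [← h.sum_coboundary χ hB, coboundary_splitOff_zmod hjoin]
    exact (sum_merge he' hg' _).trans (by rw [insert_erase hg])
  · rw [cut, coboundary_splitOff_zmod hjoin]
    refine le_card_ones_merge he' hg' ?_ ?_ ?_ <;> rw [insert_erase hg]
    · exact h.le_card_cut χ hB hX
    · exact (h.even_card_cut hB).two_dvd.modEq_zero_nat.trans (by simp [Nat.ModEq])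
    · exact fun htight hone =>
        hadm.cut χ ⟨hB, hX, htight⟩ ⟨mem_ones.2 ⟨he, hone.1⟩, mem_ones.2 ⟨hg, hone.2⟩⟩
  · rw [← h.sum_sign]
    exact (sum_merge he' hg' _).trans (by rw [insert_erase hg])
  · rw [oddEdges, coboundary_splitOff_zmod hjoin, SignedGraph_s17.splitOff, ← merge_add]
    refine le_card_ones_merge he' hg' ?_ ?_ ?_ <;> rw [insert_erase hg]
    · exact h.le_card_oddEdges χ hB
    · exact h.card_oddEdges_modEq hB
    · exact fun htight hone =>
        hadm.switching χ ⟨hB, htight⟩ ⟨mem_ones.2 ⟨he, hone.1⟩, mem_ones.2 ⟨hg, hone.2⟩⟩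

end SplittingInvariant

end SplittingInvariant

section AdmissiblePairs

variable [DecidableEq V] {H : SignedGraph_s17 V E} {k : ℕ} {B X : Finset V} {y : V}
  {χ ψ : V → ZMod 2} {e : E}

namespace SplittingInvariant

/-- Submodularity makes the join tight, unless it is constant on `X`; in that case the two
differences contradict posimodularity. -/
theorem isTightCut_join (h : H.SplittingInvariant k B X) (hends : H.EndsIn (insert y X))
    (hχ : H.IsTightCut k B X χ) (hψ : H.IsTightCut k B X ψ) (hχy : χ y = 0) (hψy : ψ y = 0)
    (he : e ∈ H.star y) (heχ : e ∈ H.cut χ) (heψ : e ∈ H.cut ψ) :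
    H.IsTightCut k B X (χ + ψ + χ * ψ) := by
  obtain ⟨hedge, i, hi, hne⟩ := mem_star.1 he
  set u := H.ends e (!i)
  have hu : u ∈ X := mem_of_mem_insert_of_ne (hends e hedge _) hne
  have hχu : χ u = 1 := by
    rw [← (mem_cut.1 heχ).2, Multigraph.coboundary_eq _ _ _ i, hi, hχy, zero_add]
  have hψu : ψ u = 1 := by
    rw [← (mem_cut.1 heψ).2, Multigraph.coboundary_eq _ _ _ i, hi, hψy, zero_add]
  have hjoin : ¬ConstOn X (χ + ψ + χ * ψ) := by
    intro hconst
    have hle_left := h.le_card_cut (χ * (1 + ψ))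
      (hχ.constOn.comp₂ hψ.constOn fun a b => a * (1 + b)) fun hdiff =>
        hψ.not_constOn (constOn_of_constOn_join hu hχu hψu hconst hdiff)
    have hle_right := h.le_card_cut (ψ * (1 + χ))
      (hψ.constOn.comp₂ hχ.constOn fun a b => a * (1 + b)) fun hdiff =>
        hχ.not_constOn (constOn_of_constOn_join hu hψu hχu
          (by rwa [add_comm ψ, mul_comm ψ]) hdiff)
    have hlt := card_cut_sdiff_add_card_cut_sdiff_lt hedge (hi ▸ hχy) (hi ▸ hψy) hχu hψu
    rw [hχ.card_cut, hψ.card_cut] at hlt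
    omega
  have hmeet_le := h.le_card_cut (χ * ψ) (hχ.constOn.comp₂ hψ.constOn (· * ·))
    (not_constOn_mul hu hχu hψu hχ.not_constOn)
  have hjoin_const := hχ.constOn.comp₂ hψ.constOn fun a b => a + b + a * b
  have hjoin_le := h.le_card_cut (χ + ψ + χ * ψ) hjoin_const hjoin
  have hsubmodular := H.card_cut_mul_add_card_cut_join_le χ ψ
  rw [hχ.card_cut, hψ.card_cut] at hsubmodular
  exact ⟨hjoin_const, hjoin, by omega⟩

theorem oddEdges_eq_or_eq_symmDiff_star [DecidableEq E] (h : H.SplittingInvariant k B X)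
    (hends : H.EndsIn (insert y X)) (hχ : H.IsTightSwitching k B χ)
    (hψ : H.IsTightSwitching k B ψ) (heχ : e ∈ H.oddEdges χ) (heψ : e ∈ H.oddEdges ψ) :
    H.oddEdges ψ = H.oddEdges χ ∨ H.oddEdges ψ = symmDiff (H.oddEdges χ) (H.star y) := by
  have hψ_eq : H.oddEdges ψ = symmDiff (H.oddEdges χ) (H.cut (χ + ψ)) := by
    rw [← symmDiff_oddEdges, symmDiff_symmDiff_cancel_left]
  have hlt : #(H.cut (χ + ψ)) < 2 * k := by
    have hcard := card_symmDiff_add_two_mul_card_inter (H.oddEdges χ) (H.oddEdges ψ)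
    have hpos : 0 < #(H.oddEdges χ ∩ H.oddEdges ψ) := card_pos.2 ⟨e, mem_inter.2 ⟨heχ, heψ⟩⟩
    rw [symmDiff_oddEdges, hχ.card_oddEdges, hψ.card_oddEdges] at hcard
    omega
  have hconst : ConstOn X (χ + ψ) := by
    by_contra hX
    exact hlt.not_ge (h.le_card_cut _ (hχ.constOn.comp₂ hψ.constOn (· + ·)) hX)
  rcases cut_eq_empty_or_eq_star hends hconst with hcut | hcut
  · exact .inl (by rw [hψ_eq, hcut]; exact symmDiff_bot _)
  · exact .inr (by rw [hψ_eq, hcut])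

theorem exists_mem_star_of_loop (h : H.SplittingInvariant k B X) (hends : H.EndsIn (insert y X))
    (hk : 0 < k) (hloop : ∀ i, H.ends e i = y) (hstar : 2 * k ≤ #(H.star y)) :
    ∃ g ∈ H.star y, ∀ χ, H.IsTightSwitching k B χ → ¬(e ∈ H.oddEdges χ ∧ g ∈ H.oddEdges χ) := by
  classical
  by_contra! hblocked
  obtain ⟨g, hg⟩ : (H.star y).Nonempty := card_pos.1 (by omega)
  obtain ⟨χ, hχ, heχ, -⟩ := hblocked g hg
  by_cases hsub : H.star y ⊆ H.oddEdges χ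
  · have := card_le_card hsub
    rw [hχ.card_oddEdges] at this
    omega
  · obtain ⟨g', hg', hg'χ⟩ := not_subset.1 hsub
    obtain ⟨ψ, hψ, heψ, hg'ψ⟩ := hblocked g' hg'
    rcases h.oddEdges_eq_or_eq_symmDiff_star hends hχ hψ heχ heψ with heq | heq
    · exact hg'χ (heq ▸ hg'ψ)
    · have hcard := card_symmDiff_add_two_mul_card_inter (H.oddEdges χ) (H.star y)
      have hlt : #(H.oddEdges χ ∩ H.star y) < #(H.oddEdges χ) :=
        card_lt_card ⟨inter_subset_left, fun hsub =>
          notMem_star_of_loop hloop (mem_inter.1 (hsub heχ)).2⟩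
      rw [← heq, hχ.card_oddEdges, hψ.card_oddEdges] at hcard
      rw [hχ.card_oddEdges] at hlt
      omega

theorem exists_half_star_of_isTightSwitching (h : H.SplittingInvariant k B X)
    (hends : H.EndsIn (insert y X)) (hy : y ∉ B) (he : e ∈ H.star y) :
    ∃ F : Finset E, e ∈ F ∧ 2 * #F ≤ #(H.star y) ∧ ∀ g ∈ H.star y, ∀ χ,
      H.IsTightSwitching k B χ → e ∈ H.oddEdges χ ∧ g ∈ H.oddEdges χ → g ∈ F := by
  classical
  by_cases hex : ∃ χ, H.IsTightSwitching k B χ ∧ e ∈ H.oddEdges χ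
  · obtain ⟨χ, hχ, heχ⟩ := hex
    refine ⟨H.oddEdges χ ∩ H.star y, mem_inter.2 ⟨heχ, he⟩, ?_, fun g hg ψ hψ ⟨heψ, hgψ⟩ => ?_⟩
    · have hle := h.le_card_oddEdges (χ + Pi.single y 1)
        (hχ.constOn.comp₂ (constOn_single_of_notMem hy 1) (· + ·))
      have hcard := card_symmDiff_add_two_mul_card_inter (H.oddEdges χ) (H.star y)
      rw [oddEdges_add] at hle
      rw [hχ.card_oddEdges] at hcard
      rw [star] at hcard ⊢
      omega
    · rcases h.oddEdges_eq_or_eq_symmDiff_star hends hχ hψ heχ heψ with heq | heq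
      · exact mem_inter.2 ⟨heq ▸ hgψ, hg⟩
      · rw [heq, mem_symmDiff] at heψ
        tauto
  · refine ⟨{e}, mem_singleton_self e, h.two_le_card_star hy he, fun g _ χ hχ heg => ?_⟩
    exact absurd ⟨χ, hχ, heg.1⟩ hex

theorem two_mul_card_cut_inter_star_le [DecidableEq E] (h : H.SplittingInvariant k B X)
    (hyB : y ∉ B) (hyX : y ∉ X) (hχ : H.IsTightCut k B X χ) :
    2 * #(H.cut χ ∩ H.star y) ≤ #(H.star y) := by
  have hle := h.le_card_cut (χ + Pi.single y 1)
    (hχ.constOn.comp₂ (constOn_single_of_notMem hyB 1) (· + ·)) fun hconst => hχ.not_constOn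
      (constOn_of_constOn_add hconst (constOn_single_of_notMem hyX 1))
  have hcard := card_symmDiff_add_two_mul_card_inter (H.cut χ) (H.star y)
  rw [cut_add] at hle
  rw [hχ.card_cut] at hcard
  rw [star] at hcard ⊢
  omega

theorem exists_half_star_of_isTightCut (h : H.SplittingInvariant k B X)
    (hends : H.EndsIn (insert y X)) (hyB : y ∉ B) (hyX : y ∉ X) (he : e ∈ H.star y) :
    ∃ F : Finset E, e ∈ F ∧ 2 * #F ≤ #(H.star y) ∧ ∀ g ∈ H.star y, ∀ χ,
      H.IsTightCut k B X χ → e ∈ H.cut χ ∧ g ∈ H.cut χ → g ∈ F := by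
  classical
  let family : Set (V → ZMod 2) := {χ | H.IsTightCut k B X χ ∧ χ y = 0 ∧ e ∈ H.cut χ}
  have hnormalise : ∀ χ, H.IsTightCut k B X χ → e ∈ H.cut χ →
      (fun v => χ v + χ y) ∈ family := fun χ hχ heχ =>
    ⟨⟨hχ.constOn.comp (· + χ y), fun hX => hχ.not_constOn (constOn_add_const_iff.1 hX),
      by rw [cut_add_const, hχ.card_cut]⟩, CharTwo.add_self_eq_zero _, by rwa [cut_add_const]⟩
  rcases family.eq_empty_or_nonempty with hempty | hnonempty
  · refine ⟨{e}, mem_singleton_self e, h.two_le_card_star hyB he, fun g _ χ hχ heg => ?_⟩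
    exact absurd (hnormalise χ hχ heg.1) (hempty ▸ Set.notMem_empty _)
  have hfinite : ((fun χ => H.cut χ ∩ H.star y) '' family).Finite :=
    (H.star y).powerset.finite_toSet.subset
      (Set.image_subset_iff.2 fun χ _ => mem_coe.2 (mem_powerset.2 inter_subset_right))
  obtain ⟨ξ, ⟨hξ, hξy, heξ⟩, hmax⟩ := hfinite.exists_maximalFor' _ family hnonempty
  refine ⟨H.cut ξ ∩ H.star y, mem_inter.2 ⟨heξ, he⟩,
    h.two_mul_card_cut_inter_star_le hyB hyX hξ, fun g hg χ hχ ⟨heχ, hgχ⟩ => ?_⟩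
  obtain ⟨hχ', hχ'y, heχ'⟩ := hnormalise χ hχ heχ
  set χ' := fun v => χ v + χ y with hχ'_def
  have hstar_join := H.star_inter_cut_join hξy hχ'y
  have mem_join : ∀ {x}, x ∈ H.star y → x ∈ H.cut ξ ∪ H.cut χ' →
      x ∈ H.cut (ξ + χ' + ξ * χ') := fun hx hx' =>
    (mem_inter.1 (hstar_join ▸ mem_inter.2 ⟨hx, hx'⟩)).2
  refine hmax ⟨h.isTightCut_join hends hξ hχ' hξy hχ'y he heξ heχ', by simp [hξy, hχ'y],
    mem_join he (mem_union_left _ heξ)⟩ (fun x hx => ?_)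
    (mem_inter.2 ⟨mem_join hg (mem_union_right _ ?_), hg⟩)
  · exact mem_inter.2 ⟨mem_join (mem_inter.1 hx).2 (mem_union_left _ (mem_inter.1 hx).1),
      (mem_inter.1 hx).2⟩
  · rwa [hχ'_def, cut_add_const]

theorem exists_isAdmissible (h : H.SplittingInvariant k B X) (hends : H.EndsIn (insert y X))
    (hyB : y ∉ B) (hyX : y ∉ X) (he : e ∈ H.star y) :
    ∃ g ∈ H.star y, e ≠ g ∧ H.IsAdmissible k B X e g := by
  classical
  obtain ⟨F, heF, hF, hcut⟩ := h.exists_half_star_of_isTightCut hends hyB hyX he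
  obtain ⟨F', heF', hF', hswitching⟩ := h.exists_half_star_of_isTightSwitching hends hyB he
  have hlt : #(F ∪ F') < #(H.star y) := by
    have hcard := card_union_add_card_inter F F'
    have hpos : 0 < #(F ∩ F') := card_pos.2 ⟨e, mem_inter.2 ⟨heF, heF'⟩⟩
    omega
  obtain ⟨g, hg, hgF⟩ := exists_mem_notMem_of_card_lt_card hlt
  rw [mem_union, not_or] at hgF
  exact ⟨g, hg, fun heg => hgF.1 (heg ▸ heF), fun χ hχ heg => hgF.1 (hcut g hg χ hχ heg),
    fun χ hχ heg => hgF.2 (hswitching g hg χ hχ heg)⟩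

end SplittingInvariant

end AdmissiblePairs

section EliminatingVertices

variable [DecidableEq V] {H : SignedGraph_s17 V E} {k : ℕ} {B X : Finset V} {y : V} {e g : E}
  {i j : Bool}

/-- If there is a loop at `y`, then the star of `y` has at least `2 * k` edges. The loop can then be
split off with an edge of the star, which does not change the size of the star; hence loops at `y`
are used up first. -/
def LoopsGuarded (H : SignedGraph_s17 V E) (k : ℕ) (y : V) : Prop :=
  ∀ e ∈ H.edges, (∀ i, H.ends e i = y) → 2 * k ≤ #(H.star y)

theorem SplittingInvariant.loopsGuarded (h : H.SplittingInvariant k B X) (hB : B.Nonempty)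
    (hBX : B ⊆ X) (hyX : y ∈ X) (hyB : y ∉ B) : H.LoopsGuarded k y := by
  intro _ _ _
  obtain ⟨b, hb⟩ := hB
  refine h.le_card_cut _ (constOn_single_of_notMem hyB 1) fun hconst => ?_
  have hyb := hconst y hyX b (hBX hb)
  rw [Pi.single_eq_same, Pi.single_eq_of_ne (ne_of_mem_of_not_mem hb hyB)] at hyb
  exact one_ne_zero hyb

variable [DecidableEq E]

theorem card_star_splitOff_of_loop (he : e ∈ H.edges) (hg : g ∈ H.edges) (hne : e ≠ g)
    (hloop : ∀ i, H.ends e i = y) (hjoin : H.ends e i = H.ends g j) :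
    #((H.splitOff e g i j).star y) = #(H.star y) := by
  have hcard := card_ones_merge (mem_erase.2 ⟨hne, he⟩) (notMem_erase g H.edges)
    (H.coboundary (Pi.single y 1))
  rw [insert_erase hg, Multigraph.coboundary_eq_zero_of_loop hloop, zero_mul, ZMod.val_zero,
    mul_zero, add_zero] at hcard
  rw [star, star, cut, coboundary_splitOff_zmod hjoin]
  exact hcard

theorem LoopsGuarded.splitOff_of_loopless (hloopless : ∀ e ∈ H.edges, ¬∀ i, H.ends e i = y)
    (hg : H.ends g (!j) ≠ y) : (H.splitOff e g i j).LoopsGuarded k y := by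
  intro x hx hloop
  rcases eq_or_ne x e with rfl | hxe
  · exact absurd (splitOff_ends_self.symm.trans (hloop i)) hg
  · exact absurd (splitOff_ends_of_ne (H := H) (g := g) (i := i) (j := j) hxe ▸ hloop)
      (hloopless x (mem_of_mem_erase hx))

theorem SplittingInvariant.exists_splitStep_of_loop (h : H.SplittingInvariant k B X) (hk : 0 < k)
    (hyB : y ∉ B) (hends : H.EndsIn (insert y X)) (he : e ∈ H.edges)
    (hloop : ∀ i, H.ends e i = y) (hstar : 2 * k ≤ #(H.star y)) :
    ∃ K, SplitStep B H K ∧ K.EndsIn (insert y X) ∧ K.SplittingInvariant k B X ∧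
      K.LoopsGuarded k y := by
  obtain ⟨g, hg, hswitching⟩ := h.exists_mem_star_of_loop hends hk hloop hstar
  have hne : e ≠ g := fun heg => notMem_star_of_loop hloop (heg ▸ hg)
  obtain ⟨hg, j, hj, -⟩ := mem_star.1 hg
  have hjoin : H.ends e false = H.ends g j := (hloop false).trans hj.symm
  refine ⟨H.splitOff e g false j, ⟨e, he, g, hg, hne, false, j, hjoin, hloop false ▸ hyB, rfl⟩,
    hends.splitOff he hg, h.splitOff he hg hne hjoin ⟨fun χ _ hχ => ?_, hswitching⟩,
    fun _ _ _ => ?_⟩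
  · have hone := (mem_cut.1 hχ.1).2
    rw [Multigraph.coboundary_eq_zero_of_loop hloop] at hone
    exact zero_ne_one hone
  · rwa [card_star_splitOff_of_loop he hg hne hloop hjoin]

theorem SplittingInvariant.exists_splitStep_of_loopless (h : H.SplittingInvariant k B X)
    (hyB : y ∉ B) (hyX : y ∉ X) (hends : H.EndsIn (insert y X)) (he : e ∈ H.star y)
    (hloopless : ∀ e ∈ H.edges, ¬∀ i, H.ends e i = y) :
    ∃ K, SplitStep B H K ∧ K.EndsIn (insert y X) ∧ K.SplittingInvariant k B X ∧
      K.LoopsGuarded k y := by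
  obtain ⟨g, hg, hne, hadm⟩ := h.exists_isAdmissible hends hyB hyX he
  obtain ⟨he, i, hi, -⟩ := mem_star.1 he
  obtain ⟨hg, j, hj, hgy⟩ := mem_star.1 hg
  have hjoin : H.ends e i = H.ends g j := hi.trans hj.symm
  exact ⟨H.splitOff e g i j, ⟨e, he, g, hg, hne, i, j, hjoin, hi ▸ hyB, rfl⟩,
    hends.splitOff he hg, h.splitOff he hg hne hjoin hadm,
    LoopsGuarded.splitOff_of_loopless hloopless hgy⟩

theorem SplittingInvariant.exists_splitStep (h : H.SplittingInvariant k B X) (hk : 0 < k)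
    (hyB : y ∉ B) (hyX : y ∉ X) (hends : H.EndsIn (insert y X)) (hguard : H.LoopsGuarded k y)
    (hX : ¬H.EndsIn X) :
    ∃ K, SplitStep B H K ∧ K.EndsIn (insert y X) ∧ K.SplittingInvariant k B X ∧
      K.LoopsGuarded k y := by
  by_cases hloop : ∃ e ∈ H.edges, ∀ i, H.ends e i = y
  · obtain ⟨e, he, hloop⟩ := hloop
    exact h.exists_splitStep_of_loop hk hyB hends he hloop (hguard e he hloop)
  · push Not at hloop
    have hloopless : ∀ e ∈ H.edges, ¬∀ i, H.ends e i = y := fun e he => not_forall.2 (hloop e he)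
    obtain ⟨e, he⟩ : (H.star y).Nonempty := by
      rw [nonempty_iff_ne_empty]
      exact fun hempty => hX (hends.of_star_eq_empty hempty hloopless)
    exact h.exists_splitStep_of_loopless hyB hyX hends he hloopless

theorem SplittingInvariant.exists_splits_erase_vertex (h : H.SplittingInvariant k B X)
    (hk : 0 < k) (hyB : y ∉ B) (hyX : y ∉ X) (hends : H.EndsIn (insert y X))
    (hguard : H.LoopsGuarded k y) :
    ∃ K, Splits B H K ∧ K.EndsIn X ∧ K.SplittingInvariant k B X := by
  induction hn : #H.edges using Nat.strong_induction_on generalizing H with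
  | h n ih =>
    by_cases hX : H.EndsIn X
    · exact ⟨H, .refl, hX, h⟩
    · obtain ⟨K, hstep, hKends, hK, hKguard⟩ := h.exists_splitStep hk hyB hyX hends hguard hX
      obtain ⟨L, hsplits, hL⟩ := ih _ (hn ▸ hstep.card_edges_lt) hK hKends hKguard rfl
      exact ⟨L, .head hstep hsplits, hL⟩

theorem SplittingInvariant.exists_splits (hk : 0 < k) (hB : B.Nonempty) (A : Finset V)
    (hends : H.EndsIn (A ∪ B)) (h : H.SplittingInvariant k B (A ∪ B)) :
    ∃ K, Splits B H K ∧ K.EndsIn B ∧ K.SplittingInvariant k B B := by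
  induction A using Finset.induction generalizing H with
  | empty =>
    rw [empty_union] at hends h
    exact ⟨H, .refl, hends, h⟩
  | insert y A hyA ih =>
    rw [insert_union] at hends h
    by_cases hyB : y ∈ B
    · rw [insert_eq_of_mem (mem_union_right A hyB)] at hends h
      exact ih hends h
    · have hguard := h.loopsGuarded hB (subset_union_right.trans (subset_insert _ _))
        (mem_insert_self y _) hyB
      obtain ⟨K, hHK, hKends, hK⟩ := (h.mono (subset_insert y _)).exists_splits_erase_vertex hk hyB
        (by simp [hyA, hyB]) hends hguard
      obtain ⟨L, hKL, hL⟩ := ih hKends hK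
      exact ⟨L, hHK.trans hKL, hL⟩

theorem two_mul_card_edges [Fintype E] (hends : H.EndsIn X) :
    2 * #H.edges = ∑ v ∈ X, H.valencyOn H.edges v := by
  have hsum := Multigraph.endSum_eq_sum_valencyOn hends (1 : V → ℕ)
  simpa [Multigraph.endSum, Multigraph.coboundary, mul_comm] using hsum

theorem SplittingInvariant.sign_eq_one [Fintype E] (h : H.SplittingInvariant k B X)
    (hends : H.EndsIn B) (hval : ∑ v ∈ B, H.valencyOn H.edges v = 2 * k) (he : e ∈ H.edges) :
    H.sign e = 1 := by
  have hcard := two_mul_card_edges hends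
  have hle := h.le_card_oddEdges 0 fun _ _ _ _ => rfl
  have hall : H.oddEdges 0 = H.edges := eq_of_subset_of_card_le (filter_subset _ _) (by omega)
  simpa [Multigraph.coboundary] using (mem_ones.1 (hall.ge he)).2

theorem SplittingInvariant.exists_splits_sign_eq_one [Fintype E] (hk : 0 < k) (hB : B.Nonempty)
    {A : Finset V} (hends : H.EndsIn (A ∪ B)) (h : H.SplittingInvariant k B (A ∪ B))
    (hval : ∑ v ∈ B, H.valencyOn H.edges v = 2 * k) :
    ∃ K, Splits B H K ∧ K.EndsIn B ∧ ∀ e ∈ K.edges, K.sign e = 1 := by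
  obtain ⟨K, hsplits, hKends, hK⟩ := SplittingInvariant.exists_splits hk hB A hends h
  refine ⟨K, hsplits, hKends, fun e => hK.sign_eq_one hKends ?_⟩
  rw [← hval, sum_congr rfl fun v hv => hsplits.valencyOn_eq hv]

end EliminatingVertices

section RegularWithHub

theorem endSum_val_le {H : SignedGraph_s17 V E} (hsign : ∀ e ∈ H.edges, H.sign e = 1) (χ : V → ZMod 2) :
    H.endSum H.edges (fun v => (χ v).val) ≤ #H.edges + #(H.oddEdges χ) := by
  have pointwise : ∀ a b : ZMod 2, a.val + b.val ≤ 1 + (1 + (a + b)).val := by decide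
  rw [oddEdges, card_ones_eq_sum_val, card_eq_sum_ones, ← sum_add_distrib]
  refine sum_le_sum fun e he => ?_
  rw [Pi.add_apply, hsign e he]
  exact pointwise _ _

variable [Fintype E] [DecidableEq V] [DecidableEq E]

/-- Each vertex of `A` has valency `2 * r`, the remaining vertices `B` have valencies adding up to
`2 * k`, and all edges are odd. -/
structure IsRegularWithHub (H : SignedGraph_s17 V E) (r k : ℕ) (A B : Finset V) : Prop where
  endsIn : H.EndsIn (A ∪ B)
  disjoint : Disjoint A B
  valencyOn_eq : ∀ v ∈ A, H.valencyOn H.edges v = 2 * r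
  sum_valencyOn_eq : ∑ v ∈ B, H.valencyOn H.edges v = 2 * k
  sign_eq_one : ∀ e ∈ H.edges, H.sign e = 1

namespace IsRegularWithHub

variable {H : SignedGraph_s17 V E} {r k : ℕ} {A B : Finset V} {z : V}

theorem endSum_eq {M : Type*} [AddCommMonoid M] (h : H.IsRegularWithHub r k A B) {φ : V → M}
    (hφ : ConstOn B φ) (hz : z ∈ B) :
    H.endSum H.edges φ = (2 * r) • ∑ v ∈ A, φ v + (2 * k) • φ z := by
  rw [Multigraph.endSum_eq_sum_valencyOn h.endsIn, sum_union h.disjoint, smul_sum,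
    ← h.sum_valencyOn_eq, sum_smul]
  congr 1
  · exact sum_congr rfl fun v hv => by rw [h.valencyOn_eq v hv]
  · exact sum_congr rfl fun v hv => by rw [hφ v hv z hz]

theorem card_edges (h : H.IsRegularWithHub r k A B) : #H.edges = r * #A + k := by
  have hcard := two_mul_card_edges h.endsIn
  rw [sum_union h.disjoint, sum_congr rfl h.valencyOn_eq, h.sum_valencyOn_eq, sum_const,
    smul_eq_mul] at hcard
  linarith

/-- Counting the ends at which `χ = 1`, and likewise those at which `χ = 0`, bounds the number of
odd edges from below; one of the two bounds is at least `k`. -/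
theorem le_card_oddEdges (h : H.IsRegularWithHub r k A B) (hB : B.Nonempty) (hA : Even #A)
    (hkr : k ≤ r) {χ : V → ZMod 2} (hχ : ConstOn B χ) : k ≤ #(H.oddEdges χ) := by
  obtain ⟨z, hz⟩ := hB
  obtain ⟨m, hm⟩ := hA
  have bound : ∀ ψ : V → ZMod 2, ConstOn B ψ →
      2 * r * #(ones A ψ) + 2 * k * (ψ z).val ≤ 2 * r * m + k + #(H.oddEdges ψ) := by
    intro ψ hψ
    have hle := endSum_val_le h.sign_eq_one ψ
    rw [h.endSum_eq (hψ.comp ZMod.val) hz, h.card_edges, hm, ← card_ones_eq_sum_val, smul_eq_mul,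
      smul_eq_mul] at hle
    linarith
  have hbound₁ := bound χ hχ
  have hbound₀ := bound (fun v => χ v + 1) (hχ.comp (· + 1))
  rw [oddEdges_add_const] at hbound₀
  have hones := card_ones_add_card_ones_add_one A χ
  generalize #(ones A χ) = s at *
  generalize #(ones A fun v => χ v + 1) = s' at *
  have val_eq : ∀ a : ZMod 2, a.val = 0 ∧ (a + 1).val = 1 ∨ a.val = 1 ∧ (a + 1).val = 0 := by
    decide
  rcases val_eq (χ z) with ⟨hz₁, hz₀⟩ | ⟨hz₁, hz₀⟩ <;> rw [hz₁] at hbound₁ <;>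
    rw [hz₀] at hbound₀
  · rcases le_or_gt s m with hs | hs <;> nlinarith
  · rcases lt_or_ge s m with hs | hs <;> nlinarith

theorem splittingInvariant (h : H.IsRegularWithHub r k A B) (hB : B.Nonempty) (hA : Even #A)
    (hkr : k ≤ r)
    (hcut : ∀ χ : V → ZMod 2, ConstOn B χ → ¬ConstOn (A ∪ B) χ → 2 * k ≤ #(H.cut χ)) :
    H.SplittingInvariant k B (A ∪ B) where
  sum_coboundary χ hχ := by
    obtain ⟨z, hz⟩ := hB
    have hsum := h.endSum_eq hχ hz
    rwa [mul_smul, mul_smul, two_nsmul, two_nsmul, CharTwo.add_self_eq_zero,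
      CharTwo.add_self_eq_zero, add_zero] at hsum
  le_card_cut := hcut
  sum_sign := by
    rw [sum_congr rfl h.sign_eq_one, sum_const, nsmul_one, h.card_edges, Nat.cast_add,
      Nat.cast_mul, (ZMod.natCast_eq_zero_iff_even).2 hA, mul_zero, zero_add]
  le_card_oddEdges χ hχ := h.le_card_oddEdges hB hA hkr hχ

end IsRegularWithHub

end RegularWithHub

section MinimumCuts

variable {H : SignedGraph_s17 V E} {k : ℕ} {X : Finset V} {χ χ₀ : V → ZMod 2}

/-- `χ` is a cut separating two vertices of `X`, of size `2 * k`, and no such cut is smaller. -/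
structure IsMinCut (H : SignedGraph_s17 V E) (k : ℕ) (X : Finset V) (χ : V → ZMod 2) : Prop where
  not_constOn : ¬ConstOn X χ
  card_cut : #(H.cut χ) = 2 * k
  le_card_cut : ∀ ψ : V → ZMod 2, ¬ConstOn X ψ → 2 * k ≤ #(H.cut ψ)

/-- The edges with both ends on the side `χ = 0`. -/
def edgesInside (H : SignedGraph_s17 V E) (χ : V → ZMod 2) : Finset E :=
  {e ∈ H.edges | ∀ i, χ (H.ends e i) = 0}

theorem mem_edgesInside {e : E} :
    e ∈ H.edgesInside χ ↔ e ∈ H.edges ∧ ∀ i, χ (H.ends e i) = 0 := mem_filter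

theorem IsMinCut.add_one (h : H.IsMinCut k X χ) : H.IsMinCut k X fun v => χ v + 1 where
  not_constOn hX := h.not_constOn (constOn_add_const_iff.1 hX)
  card_cut := by rw [cut_add_const, h.card_cut]
  le_card_cut := h.le_card_cut

theorem IsMinCut.exists_even_card_ones (h : H.IsMinCut k X χ) (hX : Odd #X) :
    ∃ ψ, H.IsMinCut k X ψ ∧ Even #(ones X ψ) := by
  rcases Nat.even_or_odd #(ones X χ) with heven | hodd
  · exact ⟨χ, h, heven⟩
  · refine ⟨fun v => χ v + 1, h.add_one, ?_⟩
    rw [← card_ones_add_card_ones_add_one X χ] at hX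
    exact (Nat.odd_add.1 hX).1 hodd

/-- Otherwise `χ` would cut the side `χ₀ = 0` into two parts, and the edges leaving one of the parts
would be at most half of the edges in the cut `χ₀`. -/
theorem IsMinCut.exists_mem_edgesInside [DecidableEq V] (h : H.IsMinCut k X χ₀) (hk : 0 < k)
    (hχ : ¬ConstOn (X \ ones X χ₀) χ) : ∃ e ∈ H.edgesInside χ₀, H.coboundary χ e = 1 := by
  by_contra! hinside
  obtain ⟨⟨u, hu, hχu⟩, v, hv, hχv⟩ := not_constOn_iff.1 hχ
  obtain ⟨hu, hu₀⟩ := mem_sdiff_ones.1 hu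
  obtain ⟨hv, hv₀⟩ := mem_sdiff_ones.1 hv
  have hle₁ := h.le_card_cut ((1 + χ₀) * χ) (not_constOn_iff.2
    ⟨⟨u, hu, by simp [hχu]⟩, v, hv, by simp [hv₀, hχv]⟩)
  have hle₀ := h.le_card_cut ((1 + χ₀) * (1 + χ)) (not_constOn_iff.2
    ⟨⟨v, hv, by simp [hχv, CharTwo.add_self_eq_zero]⟩, u, hu, by simp [hu₀, hχu]⟩)
  have pointwise : ∀ a b c d : ZMod 2, (a = 0 ∧ b = 0 → c + d ≠ 1) →
      ((1 + a) * c + (1 + b) * d).val + ((1 + a) * (1 + c) + (1 + b) * (1 + d)).val ≤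
        (a + b).val := by decide
  have hsum : #(H.cut ((1 + χ₀) * χ)) + #(H.cut ((1 + χ₀) * (1 + χ))) ≤ #(H.cut χ₀) := by
    simp only [cut, card_ones_eq_sum_val, ← sum_add_distrib]
    refine sum_le_sum fun e he => pointwise _ _ _ _ fun hzero => ?_
    exact hinside e (mem_edgesInside.2 ⟨he, Bool.forall_bool.2 hzero⟩)
  rw [h.card_cut] at hsum
  omega

end MinimumCuts

section DeleteInside

variable [DecidableEq E]

/-- `H` without the edges inside the side `χ = 0` of a cut. It plays the role of the graph obtained
by contracting that side to a single vertex. -/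
def deleteInside (H : SignedGraph_s17 V E) (χ : V → ZMod 2) : SignedGraph_s17 V E :=
  H.withEdges (H.edges \ H.edgesInside χ)

variable {H : SignedGraph_s17 V E} {X : Finset V} {χ χ₀ : V → ZMod 2}

theorem mem_edges_deleteInside {e : E} :
    e ∈ (H.deleteInside χ).edges ↔ e ∈ H.edges ∧ ∃ i, χ (H.ends e i) = 1 := by
  have ne_zero_iff : ∀ a : ZMod 2, ¬a = 0 ↔ a = 1 := by decide
  simp only [deleteInside, withEdges, mem_sdiff, mem_edgesInside, not_and, not_forall, ne_zero_iff]
  exact and_congr_right fun he => forall_prop_of_true he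

variable [DecidableEq V]

theorem cut_deleteInside (hends : H.EndsIn X) (hχ : ConstOn (X \ ones X χ₀) χ) :
    (H.deleteInside χ₀).cut χ = H.cut χ := by
  refine filter_subset_filter _ sdiff_subset |>.antisymm fun e he => ?_
  obtain ⟨he, hcross⟩ := mem_cut.1 he
  refine mem_cut.2 ⟨mem_sdiff.2 ⟨he, fun hinside => ?_⟩, hcross⟩
  have hzero := (mem_edgesInside.1 hinside).2
  rw [Multigraph.coboundary, hχ _ (mem_sdiff_ones.2 ⟨hends e he false, hzero false⟩) _
    (mem_sdiff_ones.2 ⟨hends e he true, hzero true⟩), CharTwo.add_self_eq_zero] at hcross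
  exact zero_ne_one hcross

variable [Fintype E]

theorem valencyOn_deleteInside {v : V} (hv : χ v = 1) :
    (H.deleteInside χ).valencyOn (H.deleteInside χ).edges v = H.valencyOn H.edges v := by
  refine congrArg card (filter_congr fun p _ => and_congr_left fun hp => ?_)
  rw [mem_edges_deleteInside]
  exact and_iff_left ⟨p.2, (congrArg χ hp).trans hv⟩

theorem sum_valencyOn_deleteInside (hends : H.EndsIn X) :
    ∑ v ∈ X \ ones X χ, (H.deleteInside χ).valencyOn (H.deleteInside χ).edges v = #(H.cut χ) := by
  have pointwise : ∀ a b : ZMod 2, (a = 1 ∨ b = 1) → (1 + a).val + (1 + b).val = (a + b).val := by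
    decide
  have hconst : ConstOn (X \ ones X χ) χ := fun u hu v hv =>
    (mem_sdiff_ones.1 hu).2.trans (mem_sdiff_ones.1 hv).2.symm
  calc ∑ v ∈ X \ ones X χ, (H.deleteInside χ).valencyOn (H.deleteInside χ).edges v
      = ∑ v ∈ X, (H.deleteInside χ).valencyOn (H.deleteInside χ).edges v • (1 + χ v).val := by
        refine sum_subset_zero_on_sdiff sdiff_subset (fun v hv => ?_) fun v hv => ?_
        · rw [Finset.sdiff_sdiff_eq_self (ones_subset X χ)] at hv
          rw [(mem_ones.1 hv).2, CharTwo.add_self_eq_zero, ZMod.val_zero, smul_zero]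
        · rw [(mem_sdiff_ones.1 hv).2, add_zero, ZMod.val_one, smul_eq_mul, mul_one]
    _ = (H.deleteInside χ).endSum (H.deleteInside χ).edges fun v => (1 + χ v).val :=
        (Multigraph.endSum_eq_sum_valencyOn
          (fun e he => hends e (mem_edges_deleteInside.1 he).1) _).symm
    _ = #((H.deleteInside χ).cut χ) := by
        rw [cut, card_ones_eq_sum_val]
        exact sum_congr rfl fun e he =>
          pointwise _ _ (Bool.exists_bool.1 (mem_edges_deleteInside.1 he).2)
    _ = #(H.cut χ) := by rw [cut_deleteInside hends hconst]

end DeleteInside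

section ConnectedRegular

variable [Fintype E] [DecidableEq V] [DecidableEq E]

/-- `H` is a connected `2 * r`-regular graph with vertex set `X`, all of whose edges are odd. -/
structure IsConnectedRegular (H : SignedGraph_s17 V E) (r : ℕ) (X : Finset V) : Prop where
  endsIn : H.EndsIn X
  valencyOn_eq : ∀ v ∈ X, H.valencyOn H.edges v = 2 * r
  sign_eq_one : ∀ e ∈ H.edges, H.sign e = 1
  cut_nonempty : ∀ χ : V → ZMod 2, ¬ConstOn X χ → (H.cut χ).Nonempty

variable {H : SignedGraph_s17 V E} {r k : ℕ} {X : Finset V} {χ : V → ZMod 2}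

theorem card_star_le_valencyOn (H : SignedGraph_s17 V E) (v : V) :
    #(H.star v) ≤ H.valencyOn H.edges v := by
  rw [Multigraph.valencyOn_eq_endSum, star, cut, card_ones_eq_sum_val]
  refine sum_le_sum fun e _ => ?_
  refine (ZMod.val_add_le _ _).trans (add_le_add ?_ ?_) <;>
    rw [Pi.single_apply, Pi.single_apply] <;> split_ifs <;> exact le_rfl

namespace IsConnectedRegular

theorem even_card_cut (h : H.IsConnectedRegular r X) (χ : V → ZMod 2) : Even #(H.cut χ) := by
  rw [← ZMod.natCast_eq_zero_iff_even, cut, natCast_card_ones]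
  refine (Multigraph.endSum_eq_sum_valencyOn h.endsIn χ).trans (sum_eq_zero fun v hv => ?_)
  rw [h.valencyOn_eq v hv, mul_smul, two_nsmul, CharTwo.add_self_eq_zero]

theorem exists_isMinCut (h : H.IsConnectedRegular r X) (hX : X.Nontrivial) :
    ∃ k χ, 0 < k ∧ k ≤ r ∧ H.IsMinCut k X χ := by
  obtain ⟨u, hu, v, hv, huv⟩ := hX
  have hstar : ¬ConstOn X (Pi.single u 1 : V → ZMod 2) :=
    not_constOn_iff.2 ⟨⟨v, hv, Pi.single_eq_of_ne huv.symm 1⟩, u, hu, Pi.single_eq_same u 1⟩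
  obtain ⟨χ, hχ, hmin⟩ := exists_minimalFor_of_wellFoundedLT
    (fun χ : V → ZMod 2 => ¬ConstOn X χ) (fun χ => #(H.cut χ)) ⟨_, hstar⟩
  have hle : ∀ ψ : V → ZMod 2, ¬ConstOn X ψ → #(H.cut χ) ≤ #(H.cut ψ) := fun ψ hψ =>
    (le_total _ _).elim id (hmin hψ)
  obtain ⟨k, hk⟩ := (h.even_card_cut χ).two_dvd
  have hpos : 0 < #(H.cut χ) := card_pos.2 (h.cut_nonempty χ hχ)
  have hupper : #(H.cut χ) ≤ 2 * r :=
    (hle _ hstar).trans ((H.card_star_le_valencyOn u).trans_eq (h.valencyOn_eq u hu))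
  exact ⟨k, χ, by omega, by omega, hχ, hk, hk ▸ hle⟩

theorem isRegularWithHub_deleteInside (h : H.IsConnectedRegular r X) (hχ : H.IsMinCut k X χ) :
    (H.deleteInside χ).IsRegularWithHub r k (ones X χ) (X \ ones X χ) where
  endsIn e he i := by
    rw [union_sdiff_of_subset (ones_subset X χ)]
    exact h.endsIn e (mem_edges_deleteInside.1 he).1 i
  disjoint := disjoint_sdiff
  valencyOn_eq v hv := by
    rw [valencyOn_deleteInside (mem_ones.1 hv).2, h.valencyOn_eq v (mem_ones.1 hv).1]
  sum_valencyOn_eq := by rw [sum_valencyOn_deleteInside h.endsIn, hχ.card_cut]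
  sign_eq_one e he := h.sign_eq_one e (mem_edges_deleteInside.1 he).1

theorem exists_splits_deleteInside (h : H.IsConnectedRegular r X) (hχ : H.IsMinCut k X χ)
    (hk : 0 < k) (hkr : k ≤ r) (heven : Even #(ones X χ)) :
    ∃ K, Splits (X \ ones X χ) (H.deleteInside χ) K ∧ K.EndsIn (X \ ones X χ) ∧
      ∀ e ∈ K.edges, K.sign e = 1 := by
  obtain ⟨⟨v, hv, hχv⟩, -⟩ := not_constOn_iff.1 hχ.not_constOn
  have hB : (X \ ones X χ).Nonempty := ⟨v, mem_sdiff_ones.2 ⟨hv, hχv⟩⟩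
  have hhub := h.isRegularWithHub_deleteInside hχ
  refine (hhub.splittingInvariant hB heven hkr fun ψ hψ hsep => ?_).exists_splits_sign_eq_one hk hB
    hhub.endsIn hhub.sum_valencyOn_eq
  rw [union_sdiff_of_subset (ones_subset X χ)] at hsep
  rw [cut_deleteInside h.endsIn hψ]
  exact hχ.le_card_cut ψ hsep

theorem of_splits_deleteInside {K : SignedGraph_s17 V E} (h : H.IsConnectedRegular r X)
    (hχ : H.IsMinCut k X χ) (hk : 0 < k)
    (hsplits : Splits (X \ ones X χ) (H.deleteInside χ) K) (hends : K.EndsIn (X \ ones X χ))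
    (hsign : ∀ e ∈ K.edges, K.sign e = 1) :
    Splits (X \ ones X χ) H (K.withEdges (H.edgesInside χ ∪ K.edges)) ∧
      (K.withEdges (H.edgesInside χ ∪ K.edges)).IsConnectedRegular r (X \ ones X χ) := by
  have hunion : Splits (X \ ones X χ) H (K.withEdges (H.edgesInside χ ∪ K.edges)) := by
    have hedges : H.edgesInside χ ∪ H.edges \ H.edgesInside χ = H.edges :=
      union_sdiff_of_subset (filter_subset _ _)
    have hunion := hsplits.union disjoint_sdiff
    simpa only [deleteInside, withEdges, hedges] using hunion
  have hnotMem : ∀ e ∈ H.edgesInside χ, e ∉ (H.deleteInside χ).edges := fun e he he' =>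
    (mem_sdiff.1 he').2 he
  have hendsInside : ∀ e ∈ H.edgesInside χ, K.ends e = H.ends e := fun e he =>
    hsplits.ends_eq_of_notMem (hnotMem e he)
  refine ⟨hunion, fun e he i => ?_, fun v hv => ?_, fun e he => ?_, fun ψ hψ => ?_⟩
  · rcases mem_union.1 he with he | he
    · obtain ⟨heH, hzero⟩ := mem_edgesInside.1 he
      change K.ends e i ∈ _
      rw [hendsInside e he]
      exact mem_sdiff_ones.2 ⟨h.endsIn e heH i, hzero i⟩
    · exact hends e he i
  · rw [hunion.valencyOn_eq hv, h.valencyOn_eq v (mem_sdiff.1 hv).1]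
  · rcases mem_union.1 he with he | he
    · exact (hsplits.sign_eq_of_notMem (hnotMem e he)).trans
        (h.sign_eq_one e (mem_edgesInside.1 he).1)
    · exact hsign e he
  · obtain ⟨e, he, hcross⟩ := hχ.exists_mem_edgesInside hk hψ
    refine ⟨e, mem_cut.2 ⟨mem_union_left _ he, ?_⟩⟩
    rw [← hcross, Multigraph.coboundary, Multigraph.coboundary, withEdges, hendsInside e he]

theorem exists_splits_ssubset (h : H.IsConnectedRegular r X) (hodd : Odd #X)
    (hX : X.Nontrivial) :
    ∃ Y K, Y ⊂ X ∧ Odd #Y ∧ Splits Y H K ∧ K.IsConnectedRegular r Y := by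
  obtain ⟨k, χ, hk, hkr, hχ⟩ := h.exists_isMinCut hX
  obtain ⟨χ, hχ, heven⟩ := hχ.exists_even_card_ones hodd
  obtain ⟨K, hsplits, hends, hsign⟩ := h.exists_splits_deleteInside hχ hk hkr heven
  obtain ⟨-, v, hv, hχv⟩ := not_constOn_iff.1 hχ.not_constOn
  have hssubset : X \ ones X χ ⊂ X :=
    sdiff_ssubset (ones_subset X χ) ⟨v, mem_ones.2 ⟨hv, hχv⟩⟩
  have hoddSide : Odd #(X \ ones X χ) := by
    rw [← card_sdiff_add_card_eq_card (ones_subset X χ)] at hodd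
    exact (Nat.odd_add.1 hodd).2 heven
  exact ⟨_, _, hssubset, hoddSide, h.of_splits_deleteInside hχ hk hsplits hends hsign⟩

theorem exists_hasOddDecomposition (h : H.IsConnectedRegular r X) (hodd : Odd #X) :
    ∃ z ∈ X, H.HasOddDecomposition r z := by
  induction X using Finset.strongInduction generalizing H with
  | H X ih =>
    rcases X.eq_empty_or_nonempty with rfl | hne
    · simp at hodd
    rcases hne.exists_eq_singleton_or_nontrivial with ⟨z, rfl⟩ | hX
    · have hcard := two_mul_card_edges h.endsIn
      rw [sum_singleton, h.valencyOn_eq z (mem_singleton_self z)] at hcard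
      obtain rfl : #H.edges = r := by omega
      exact ⟨z, mem_singleton_self z, hasOddDecomposition_of_loops h.endsIn h.sign_eq_one⟩
    · obtain ⟨Y, K, hYX, hY, hsplits, hK⟩ := h.exists_splits_ssubset hodd hX
      obtain ⟨z, hz, hdec⟩ := ih Y hYX hK hY
      exact ⟨z, hYX.subset hz, hsplits.hasOddDecomposition hdec⟩

end IsConnectedRegular

end ConnectedRegular

end SignedGraph_s17

namespace Multigraph

variable {V E : Type} {G : Multigraph V E} {S : Finset E} {u v : V}

theorem AdjOn.symm (h : G.AdjOn S u v) : G.AdjOn S v u := by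
  obtain ⟨e, he, i, hu, hv⟩ := h
  exact ⟨e, he, !i, hv, by rwa [Bool.not_not]⟩

theorem forall_coboundary_eq_zero_iff {χ : V → ZMod 2} :
    (∀ e ∈ S, G.coboundary χ e = 0) ↔ ∀ u v, G.AdjOn S u v → χ u = χ v := by
  constructor
  · rintro hχ _ _ ⟨e, he, i, rfl, rfl⟩
    rw [← CharTwo.add_eq_zero, ← coboundary_eq, hχ e he]
  · exact fun hχ e he => CharTwo.add_eq_zero.2 (hχ _ _ ⟨e, he, false, rfl, rfl⟩)

theorem eq_of_reflTransGen_adjOn {χ : V → ZMod 2} (hχ : ∀ e ∈ S, G.coboundary χ e = 0)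
    (h : Relation.ReflTransGen (G.AdjOn S) u v) : χ u = χ v := by
  induction h with
  | refl => rfl
  | tail _ hadj ih => exact ih.trans (forall_coboundary_eq_zero_iff.1 hχ _ _ hadj)

theorem mem_suppV [Fintype V] [DecidableEq V] :
    v ∈ G.suppV S ↔ ∃ e ∈ S, ∃ i, G.ends e i = v := by
  rw [suppV, mem_filter, and_iff_right (mem_univ v)]

end Multigraph

namespace SignedGraph_s17

namespace IsRootedOddEulerian

variable {V E : Type} {H : SignedGraph_s17 V E} {S : Finset E} {v z : V}

theorem odd_card (hS : H.IsRootedOddEulerian z S) (hsign : ∀ e ∈ S, H.sign e = 1) : Odd #S := by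
  rw [← ZMod.natCast_eq_one_iff_odd, ← hS.odd, sum_congr rfl hsign, sum_const, nsmul_one]

theorem nonempty (hS : H.IsRootedOddEulerian z S) : S.Nonempty :=
  nonempty_of_sum_ne_zero (hS.odd.trans_ne one_ne_zero)

theorem even_valencyOn [Fintype E] [DecidableEq V] [DecidableEq E]
    (hS : H.IsRootedOddEulerian z S) (v : V) : Even (H.valencyOn S v) := by
  rw [← ZMod.natCast_eq_zero_iff_even, ← hS.even (Pi.single v 1), Multigraph.valencyOn_eq_endSum,
    Multigraph.endSum, Nat.cast_sum]
  refine sum_congr rfl fun e _ => ?_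
  simp only [Multigraph.coboundary, Pi.single_apply, Nat.cast_add, Nat.cast_ite, Nat.cast_one,
    Nat.cast_zero]

variable [Fintype V] [DecidableEq V]

theorem reflTransGen_adjOn (hS : H.IsRootedOddEulerian z S) (hv : v ∈ H.suppV S) :
    Relation.ReflTransGen (H.AdjOn S) z v := by
  classical
  obtain ⟨e, he, i, rfl⟩ := Multigraph.mem_suppV.1 hv
  let unreached : V → ZMod 2 := fun w => if Relation.ReflTransGen (H.AdjOn S) z w then 0 else 1
  have hunreached : ∀ x ∈ S, H.coboundary unreached x = 0 :=
    Multigraph.forall_coboundary_eq_zero_iff.2 fun u w huw =>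
      if_congr ⟨fun hu => hu.tail huw, fun hw => hw.tail huw.symm⟩ rfl rfl
  have hzero := hS.connected unreached (if_pos .refl) hunreached e he i
  by_contra hcontra
  exact one_ne_zero ((if_neg hcontra).symm.trans hzero)

theorem mem_suppV (hS : H.IsRootedOddEulerian z S) : z ∈ H.suppV S := by
  by_contra hz
  have hne : ∀ e ∈ S, ∀ i, H.ends e i ≠ z := fun e he i hi =>
    hz (Multigraph.mem_suppV.2 ⟨e, he, i, hi⟩)
  let away : V → ZMod 2 := fun w => if w = z then 0 else 1
  have haway : ∀ e ∈ S, ∀ i, away (H.ends e i) = 1 := fun e he i => if_neg (hne e he i)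
  obtain ⟨e, he⟩ := hS.nonempty
  have hzero := hS.connected away (if_pos rfl)
    (fun x hx => by
      rw [Multigraph.coboundary, haway x hx, haway x hx, CharTwo.add_self_eq_zero]) e he false
  exact one_ne_zero ((haway e he false).symm.trans hzero)

theorem connOn (hS : H.IsRootedOddEulerian z S) : H.ConnOn S := by
  have : Std.Symm (H.AdjOn S) := ⟨fun _ _ h => h.symm⟩
  exact fun u hu v hv => (symm (hS.reflTransGen_adjOn hu)).trans (hS.reflTransGen_adjOn hv)

theorem eulerianOn [Fintype E] [DecidableEq E] (hS : H.IsRootedOddEulerian z S) :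
    H.EulerianOn S :=
  ⟨hS.nonempty, hS.connOn, hS.even_valencyOn⟩

end IsRootedOddEulerian

theorem isConnectedRegular_of_connected {V E : Type} [Fintype V] [Fintype E] [DecidableEq V]
    [DecidableEq E] {G : Multigraph V E} {r : ℕ} (hconn : G.Connected)
    (hreg : ∀ v, G.valency v = 2 * r) :
    (SignedGraph_s17.mk G 1 univ).IsConnectedRegular r univ where
  endsIn _ _ _ := mem_univ _
  valencyOn_eq v _ := hreg v
  sign_eq_one _ _ := rfl
  cut_nonempty χ hχ := by
    contrapose! hχ
    have hzero : ∀ e ∈ univ, G.coboundary χ e = 0 := fun e he => by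
      have ne_one : ∀ a : ZMod 2, a ≠ 1 → a = 0 := by decide
      exact ne_one _ fun hcross => notMem_empty e (hχ ▸ mem_cut.2 ⟨he, hcross⟩)
    exact fun u _ v _ => Multigraph.eq_of_reflTransGen_adjOn hzero (hconn.2 u v)

end SignedGraph_s17

theorem stmt17_general {V E : Type} [Fintype V] [Fintype E] [DecidableEq V] [DecidableEq E]
    (G : Multigraph V E) (r : ℕ) (hconn : G.Connected) (hreg : ∀ v : V, G.valency v = 2 * r)
    (hodd : Odd (Fintype.card V)) :
    ∃ P : Fin r → Finset E, Pairwise (Function.onFun Disjoint P) ∧ univ.biUnion P = univ ∧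
      (∀ t, G.EulerianOn (P t) ∧ Odd #(P t)) ∧ ∃ v, ∀ t, v ∈ G.suppV (P t) := by
  obtain ⟨z, -, c, hc, hclass⟩ :=
    (SignedGraph_s17.isConnectedRegular_of_connected hconn hreg).exists_hasOddDecomposition hodd
  refine ⟨fun t => {e | c e = t}, fun s t hst => ?_, ?_, fun t => ?_, z, fun t => ?_⟩
  · exact disjoint_filter.2 fun e _ hs ht => hst (Fin.ext (hs.symm.trans ht))
  · exact eq_univ_of_forall fun e =>
      mem_biUnion.2 ⟨⟨c e, hc e (mem_univ e)⟩, mem_univ _, mem_filter.2 ⟨mem_univ e, rfl⟩⟩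
  · exact ⟨(hclass t t.isLt).eulerianOn, (hclass t t.isLt).odd_card fun _ _ => rfl⟩
  · exact (hclass t t.isLt).mem_suppV

open Multigraph in
/-- Every connected `6`-regular graph of odd order can be
decomposed into three edge-disjoint eulerian subgraphs sharing a common vertex
such that each of them has an odd number of edges. -/
theorem stmt17 {V E : Type} [Fintype V] [Fintype E] [DecidableEq V]
    [DecidableEq E] (G : Multigraph V E) (hconn : G.Connected)
    (hreg : ∀ v : V, G.valency v = 6) (hodd : Odd (Fintype.card V)) :
    ∃ S₁ S₂ S₃ : Finset E,
      Disjoint S₁ S₂ ∧ Disjoint S₁ S₃ ∧ Disjoint S₂ S₃ ∧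
      S₁ ∪ S₂ ∪ S₃ = univ ∧
      G.EulerianOn S₁ ∧ G.EulerianOn S₂ ∧ G.EulerianOn S₃ ∧
      Odd S₁.card ∧ Odd S₂.card ∧ Odd S₃.card ∧
      ∃ v : V, v ∈ G.suppV S₁ ∧ v ∈ G.suppV S₂ ∧ v ∈ G.suppV S₃ := by
  obtain ⟨P, hdisj, hunion, hP, v, hv⟩ := stmt17_general G 3 hconn hreg hodd
  refine ⟨P 0, P 1, P 2, hdisj (by decide), hdisj (by decide), hdisj (by decide), ?_,
    (hP 0).1, (hP 1).1, (hP 2).1, (hP 0).2, (hP 1).2, (hP 2).2, v, hv 0, hv 1, hv 2⟩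
  rw [← hunion]
  ext e
  simp [Fin.exists_fin_succ]
end
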